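/- Let K be a field of characteristic zero, let n ≥ 1 and M ≥ 1 be integers, let ζ_j = (ζ_{j,1},…,ζ_{j,n}) ∈ Kⁿ for j = 1,…,M, let d₁ ≥ d₂ ≥ ⋯ ≥ dₙ > 0 be integers, let t₁,…,t_M ∈ [0,∞), and let P ∈ K[x₁,…,xₙ] be a nonzero polynomial. Assume: (i) ζ_{j,i} ≠ ζ_{j',i} for all j ≠ j' and all i = 1,…,n; (ii) P has degree at most d_i in x_i for each i; and (iii) t_d(P, ζ_j) = t_j for all j = 1,…,M. Then Σ_{j=1}^M Vol_n(t_j) ≤ ∏_{i=1}^n ( 1 + max{M−2, 0}·Σ_{l=i+1}^n d_l/d_i ). (Theorem 10.5, Dyson's lemma of Esnault–Viehweg, as stated in the paper over an arbitrary field of characteristic zero.) -/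

import Mathlib

/-- `Vol n τ` is the Lebesgue measure of
`{(x₁, …, xₙ) ∈ [0,1]ⁿ : x₁ + ⋯ + xₙ < τ}`. -/
noncomputable def Vol (n : ℕ) (τ : ℝ) : ℝ :=
  (MeasureTheory.volume
    {x : Fin n → ℝ | (∀ i, x i ∈ Set.Icc (0 : ℝ) 1) ∧ ∑ i, x i < τ}).toReal

/-- The index `t_d(P, ζ)` of a polynomial `P ∈ K[x₁, …, xₙ]` at a point
`ζ ∈ Kⁿ` with respect to weights `d = (d₁, …, dₙ)`: writing
`P = Σ_k a_k (x₁ − ζ₁)^{k₁} ⋯ (xₙ − ζₙ)^{kₙ}`, it is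
`min { k₁/d₁ + ⋯ + kₙ/dₙ : a_k ≠ 0 }`.  The Taylor coefficient `a_k` is the
coefficient of `x^k` in `P(x + ζ)`, i.e. in the image of `P` under the
substitution `xᵢ ↦ xᵢ + ζᵢ`. -/
noncomputable def polyIndex {K : Type*} [CommRing K] {n : ℕ} (d : Fin n → ℕ)
    (P : MvPolynomial (Fin n) K) (ζ : Fin n → K) : ℝ :=
  sInf {t : ℝ | ∃ k : Fin n →₀ ℕ,
    MvPolynomial.coeff k
      (MvPolynomial.bind₁
        (fun i => MvPolynomial.X i + MvPolynomial.C (ζ i)) P) ≠ 0 ∧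
    t = ∑ i, (k i : ℝ) / (d i : ℝ)}
open IntermediateField.algebraAdjoinAdjoin in
theorem exists_deriv {K F : Type*} [Field K] [CharZero K] [Field F] [Algebra K F] (z : F)
    (hz : Transcendental K z) : ∃ δ : Derivation K F F, δ z ≠ 0 := by
  classical
  have hz1 : AlgebraicIndepOn K id ({z} : Set F) := by
    have := (algebraicIndependent_unique_type_iff (ι := ({z} : Set F)) (R := K) (x := fun x => (x : F))).2
      (by simpa using hz)
    exact this
  obtain ⟨s, hzs, hs⟩ := exists_isTranscendenceBasis_superset (R := K) (A := F) hz1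
  have hzs' : z ∈ s := hzs rfl
  have hsi : AlgebraicIndependent K ((↑) : s → F) := hs.1
  have halg : Algebra.IsAlgebraic (IntermediateField.adjoin K (Set.range ((↑) : s → F))) F :=
    hs.isAlgebraic_field
  have : CharZero (IntermediateField.adjoin K (Set.range ((↑) : s → F))) := inferInstance
  have : Algebra.IsSeparable (IntermediateField.adjoin K (Set.range ((↑) : s → F))) F := inferInstance
  have e1 : Algebra.FormallyEtale (IntermediateField.adjoin K (Set.range ((↑) : s → F))) F :=
    Algebra.FormallyEtale.of_isSeparable _ F
  have e2 : Algebra.FormallyEtale (Algebra.adjoin K (Set.range ((↑) : s → F))) (IntermediateField.adjoin K (Set.range ((↑) : s → F))) :=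
    .of_isLocalization (nonZeroDivisors _)
  have e3 : Algebra.FormallyEtale (Algebra.adjoin K (Set.range ((↑) : s → F))) F :=
    .comp _ (IntermediateField.adjoin K (Set.range ((↑) : s → F))) _
  let S := Algebra.adjoin K (Set.range ((↑) : s → F))
  let e := hsi.aevalEquiv
  let i : s := ⟨z, hzs'⟩
  let D0 : Derivation K S F := Derivation.mk'
    ((Algebra.linearMap S F).restrictScalars K ∘ₗ e.toLinearMap ∘ₗ (MvPolynomial.pderiv i).toLinearMap ∘ₗ e.symm.toLinearMap)
    (by
      intro a b
      simp [Derivation.leibniz, Algebra.smul_def])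
  let l : Ω[F⁄K] →ₗ[F] F := (KaehlerDifferential.isBaseChange_of_formallyEtale K S F).lift D0.liftKaehlerDifferential
  refine ⟨l.compDer (KaehlerDifferential.D K F), ?_⟩
  have : l (KaehlerDifferential.D K F z) = 1 := by
    have hzz : z = algebraMap S F (e (MvPolynomial.X i)) := by
      simp [e, i, S]
    rw [hzz]
    have := (KaehlerDifferential.isBaseChange_of_formallyEtale K S F).lift_eq D0.liftKaehlerDifferential (KaehlerDifferential.D K S (e (MvPolynomial.X i)))
    simp only [KaehlerDifferential.map_D] at this
    refine this.trans ?_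
    simp [D0]
  simp [this]
set_option linter.unusedSimpArgs false
namespace Dys
open MvPolynomial

noncomputable def tr {K : Type*} [Field K] {n : ℕ} (z : Fin n → K) :
    MvPolynomial (Fin n) K →ₐ[K] MvPolynomial (Fin n) K :=
  bind₁ (fun i => X i + C (z i))

noncomputable def phi {n : ℕ} (d : Fin n → ℕ) (θ : ℕ) (k : Fin n →₀ ℕ) : ℚ :=
  ∑ i, min ((k i : ℚ) / (d i : ℚ)) (θ : ℚ)

theorem phi_add {n : ℕ} (d : Fin n → ℕ) (θ θ' : ℕ) (k k' : Fin n →₀ ℕ) :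
    phi d θ k + phi d θ' k' ≤ phi d (θ + θ') (k + k') := by
  unfold phi
  rw [← Finset.sum_add_distrib]
  refine Finset.sum_le_sum fun i _ => ?_
  refine le_min ?_ ?_
  · calc _ ≤ (k i : ℚ) / (d i : ℚ) + (k' i : ℚ) / (d i : ℚ) :=
        add_le_add (min_le_left _ _) (min_le_left _ _)
      _ = _ := by simp [add_div]
  · calc _ ≤ (θ : ℚ) + θ' := add_le_add (min_le_right _ _) (min_le_right _ _)
      _ = _ := by simp

theorem phi_nonneg {n : ℕ} (d : Fin n → ℕ) (θ : ℕ) (k : Fin n →₀ ℕ) : 0 ≤ phi d θ k := by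
  unfold phi
  positivity

theorem phi_mono {n : ℕ} (d : Fin n → ℕ) (θ : ℕ) {k k' : Fin n →₀ ℕ} (h : k ≤ k') :
    phi d θ k ≤ phi d θ k' := by
  unfold phi
  refine Finset.sum_le_sum fun i _ => ?_
  have : (k i : ℚ) ≤ k' i := by exact_mod_cast h i
  gcongr

theorem phi_add_single {n : ℕ} (d : Fin n → ℕ) (θ : ℕ) (k : Fin n →₀ ℕ) (i : Fin n) (p : ℕ)
    (hk : k i = 0) :
    phi d θ (k + Finsupp.single i p) = phi d θ k + min ((p : ℚ) / d i) θ := by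
  unfold phi
  rw [← Finset.add_sum_erase _ _ (Finset.mem_univ i), ← Finset.add_sum_erase _ (fun _ => _) (Finset.mem_univ i)]
  have : ∀ l ∈ Finset.univ.erase i, min (((k + Finsupp.single i p) l : ℚ) / d l) (θ : ℚ) = min ((k l : ℚ) / d l) θ := by
    intro l hl
    have : i ≠ l := (Finset.ne_of_mem_erase hl).symm
    simp [Finsupp.single_apply, this]
  rw [Finset.sum_congr rfl this]
  simp [hk]
  ring

theorem phi_zero {n : ℕ} (d : Fin n → ℕ) (θ : ℕ) : phi d θ 0 = 0 := by
  simp [phi]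

section
variable {K : Type*} [Field K] {n : ℕ}

noncomputable def II (d : Fin n → ℕ) (θ : ℕ) (z : Fin n → K) (c : ℚ) :
    Ideal (MvPolynomial (Fin n) K) where
  carrier := {f | ∀ k, coeff k (tr z f) ≠ 0 → c ≤ phi d θ k}
  zero_mem' := by simp
  add_mem' := by
    intro a b ha hb k hk
    rw [map_add, coeff_add] at hk
    by_cases h : coeff k (tr z a) = 0
    · exact hb k (by simpa [h] using hk)
    · exact ha k h
  smul_mem' := by
    intro a b hb k hk
    rw [smul_eq_mul, map_mul, coeff_mul] at hk
    obtain ⟨x, hx, hne⟩ := Finset.exists_ne_zero_of_sum_ne_zero hk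
    rw [Finset.HasAntidiagonal.mem_antidiagonal] at hx
    refine (hb x.2 (right_ne_zero_of_mul hne)).trans (phi_mono d θ ?_)
    rw [← hx]; exact le_add_self

theorem mem_II {d : Fin n → ℕ} {θ : ℕ} {z : Fin n → K} {c : ℚ} {f : MvPolynomial (Fin n) K} :
    f ∈ II d θ z c ↔ ∀ k, coeff k (tr z f) ≠ 0 → c ≤ phi d θ k := Iff.rfl

theorem II_mul {d : Fin n → ℕ} {θ θ' : ℕ} {z : Fin n → K} {c c' : ℚ}
    {f g : MvPolynomial (Fin n) K} (hf : f ∈ II d θ z c) (hg : g ∈ II d θ' z c') :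
    f * g ∈ II d (θ + θ') z (c + c') := by
  intro k hk
  rw [map_mul, coeff_mul] at hk
  obtain ⟨x, hx, hne⟩ := Finset.exists_ne_zero_of_sum_ne_zero hk
  rw [Finset.HasAntidiagonal.mem_antidiagonal] at hx
  have := add_le_add (hf x.1 (left_ne_zero_of_mul hne)) (hg x.2 (right_ne_zero_of_mul hne))
  refine this.trans ((phi_add d θ θ' _ _).trans ?_)
  rw [hx]

theorem II_of_nonpos {d : Fin n → ℕ} {θ : ℕ} {z : Fin n → K} {c : ℚ} (hc : c ≤ 0)
    (f : MvPolynomial (Fin n) K) : f ∈ II d θ z c :=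
  fun k _ => hc.trans (phi_nonneg d θ k)

theorem II_anti {d : Fin n → ℕ} {θ : ℕ} {z : Fin n → K} {c c' : ℚ} (hc : c ≤ c')
    {f : MvPolynomial (Fin n) K} (hf : f ∈ II d θ z c') : f ∈ II d θ z c :=
  fun k hk => hc.trans (hf k hk)

theorem II_pow {d : Fin n → ℕ} {θ : ℕ} {z : Fin n → K} {c : ℚ}
    {f : MvPolynomial (Fin n) K} (hf : f ∈ II d θ z c) (a : ℕ) :
    f ^ a ∈ II d (a * θ) z (a * c) := by
  induction a with
  | zero => exact II_of_nonpos (by simp) _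
  | succ a ih =>
    rw [pow_succ]
    have := II_mul ih hf
    convert this using 1
    push_cast
    rw [add_mul, one_mul, add_mul, one_mul]

@[simp] theorem tr_X (z : Fin n → K) (i : Fin n) : tr z (X i) = X i + C (z i) := by
  simp [tr]
@[simp] theorem tr_C (z : Fin n → K) (a : K) : tr z (C a) = C a := by
  simp [tr]

theorem tr_inj (z : Fin n → K) : Function.Injective (tr z) := by
  have : (tr (-z)).comp (tr z) = AlgHom.id K _ := by
    ext i; simp
  exact Function.LeftInverse.injective (g := tr (-z)) fun f => by
    have := DFunLike.congr_fun this f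
    simpa using this

/- degree spaces -/
noncomputable def UU (K : Type*) [Field K] {n : ℕ} (D : Fin n → ℕ) : Submodule K (MvPolynomial (Fin n) K) where
  carrier := {f | ∀ i, degreeOf i f ≤ D i}
  zero_mem' := by simp
  add_mem' := fun ha hb i => (degreeOf_add_le i _ _).trans (max_le (ha i) (hb i))
  smul_mem' := by
    intro c f hf i
    rw [smul_eq_C_mul]
    exact (degreeOf_C_mul_le f i c).trans (hf i)

theorem mem_UU {D : Fin n → ℕ} {f : MvPolynomial (Fin n) K} :
    f ∈ UU K D ↔ ∀ i, degreeOf i f ≤ D i := Iff.rfl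

theorem mem_UU' {D : Fin n → ℕ} {f : MvPolynomial (Fin n) K} :
    f ∈ UU K D ↔ ∀ k, coeff k f ≠ 0 → ∀ i, k i ≤ D i := by
  rw [mem_UU]
  simp only [degreeOf_le_iff, mem_support_iff]
  exact ⟨fun h k hk i => h i k hk, fun h i k hk => h k hk i⟩

theorem UU_mono {D D' : Fin n → ℕ} (h : ∀ i, D i ≤ D' i) {f : MvPolynomial (Fin n) K}
    (hf : f ∈ UU K D) : f ∈ UU K D' := fun i => (hf i).trans (h i)

theorem UU_mul {D D' : Fin n → ℕ} {f g : MvPolynomial (Fin n) K}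
    (hf : f ∈ UU K D) (hg : g ∈ UU K D') : f * g ∈ UU K (D + D') :=
  fun i => (degreeOf_mul_le i f g).trans (add_le_add (hf i) (hg i))

theorem UU_C (D : Fin n → ℕ) (a : K) : (C a : MvPolynomial (Fin n) K) ∈ UU K D :=
  fun i => by simp

theorem UU_pow {D : Fin n → ℕ} {f : MvPolynomial (Fin n) K}
    (hf : f ∈ UU K D) (a : ℕ) : f ^ a ∈ UU K (a • D) :=
  fun i => (degreeOf_pow_le i f a).trans (by simpa using Nat.mul_le_mul_left a (hf i))

theorem UU_prod {ι : Type*} (s : Finset ι) (D : ι → Fin n → ℕ) (f : ι → MvPolynomial (Fin n) K)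
    (hf : ∀ l ∈ s, f l ∈ UU K (D l)) : ∏ l ∈ s, f l ∈ UU K (∑ l ∈ s, D l) := by
  classical
  induction s using Finset.induction_on with
  | empty => exact UU_C _ 1
  | insert a s ha ih =>
    rw [Finset.prod_insert ha, Finset.sum_insert ha]
    exact UU_mul (hf a (by simp)) (ih fun l hl => hf l (by simp [hl]))

theorem UU_X (i : Fin n) : (X i : MvPolynomial (Fin n) K) ∈ UU K (Pi.single i 1) := by
  intro l
  by_cases h : l = i
  · subst h; simp [degreeOf_X]
  · simp [degreeOf_X, h]

theorem UU_X_sub (i : Fin n) (c : K) :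
    (X i - C c : MvPolynomial (Fin n) K) ∈ UU K (Pi.single i 1) :=
  sub_mem (UU_X i) (UU_C _ c)

theorem UU_of_mul {D : Fin n → ℕ} {f g : MvPolynomial (Fin n) K} (hf : f ≠ 0)
    (h : f * g ∈ UU K D) : g ∈ UU K D := by
  by_cases hg : g = 0
  · subst hg; exact zero_mem _
  intro i
  have := h i
  rw [degreeOf_mul_eq hf hg] at this
  omega

theorem UU_map (φ : MvPolynomial (Fin n) K →ₐ[K] MvPolynomial (Fin n) K) (w : Fin n → ℕ)
    (hφ : ∀ l, φ (X l) ∈ UU K (Pi.single l (w l))) {D : Fin n → ℕ} {f : MvPolynomial (Fin n) K}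
    (hf : f ∈ UU K D) : φ f ∈ UU K (fun l => w l * D l) := by
  rw [f.as_sum, map_sum]
  refine sum_mem fun m hm => ?_
  rw [monomial_eq, map_mul]
  have h1 : φ (C (coeff m f)) = C (coeff m f) := by
    rw [← algebraMap_eq]; exact φ.commutes _
  rw [h1, ← smul_eq_C_mul]
  refine Submodule.smul_mem _ _ ?_
  rw [Finsupp.prod_fintype _ _ (by simp), map_prod]
  simp only [map_pow]
  refine UU_mono ?_ (UU_prod Finset.univ _ _ (fun l _ => UU_pow (hφ l) (m l)))
  intro i
  simp only [Finset.sum_apply, Pi.smul_apply, smul_eq_mul]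
  rw [Finset.sum_eq_single i]
  · simp only [Pi.single_eq_same]
    rw [mul_comm]
    exact Nat.mul_le_mul_left _ (mem_UU'.1 hf m (mem_support_iff.1 hm) i)
  · intro b _ hb
    simp [Pi.single_eq_of_ne hb.symm]
  · simp

theorem UU_tr (z : Fin n → K) {D : Fin n → ℕ} {f : MvPolynomial (Fin n) K}
    (hf : f ∈ UU K D) : tr z f ∈ UU K D := by
  have := UU_map (tr z) (fun _ => 1) (fun l => by
    rw [tr_X]; exact add_mem (UU_X l) (UU_C _ _)) hf
  simpa using this

/- substitution -/
noncomputable def sb (i : Fin n) (c : K) :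
    MvPolynomial (Fin n) K →ₐ[K] MvPolynomial (Fin n) K :=
  bind₁ (Function.update X i (C c))

@[simp] theorem sb_X_self (i : Fin n) (c : K) : sb i c (X i) = C c := by simp [sb]
theorem sb_X_ne (i l : Fin n) (h : l ≠ i) (c : K) : sb i c (X l) = X l := by simp [sb, h]
@[simp] theorem sb_C (i : Fin n) (c a : K) : sb i c (C a) = C a := by simp [sb]

theorem UU_sb (i : Fin n) (c : K) {D : Fin n → ℕ} {f : MvPolynomial (Fin n) K}
    (hf : f ∈ UU K D) : sb i c f ∈ UU K (Function.update D i 0) := by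
  have := UU_map (sb i c) (fun l => if l = i then 0 else 1) (fun l => by
    by_cases h : l = i
    · subst h; rw [sb_X_self]; exact UU_C _ _
    · rw [sb_X_ne _ _ h]; simpa [h] using UU_X l) hf
  refine UU_mono ?_ this
  intro l
  by_cases h : l = i
  · subst h; simp
  · simp [h]

theorem X_sub_C_ne (i : Fin n) (c : K) : (X i - C c : MvPolynomial (Fin n) K) ≠ 0 := by
  intro h
  have := congrArg (sb i (c + 1)) h
  simp at this

theorem dvd_sub_sb (i : Fin n) (c : K) (f : MvPolynomial (Fin n) K) :
    (X i - C c) ∣ f - sb i c f := by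
  rw [← Ideal.mem_span_singleton, ← Ideal.Quotient.eq]
  have : (Ideal.Quotient.mkₐ K (Ideal.span {(X i - C c : MvPolynomial (Fin n) K)})) =
     (Ideal.Quotient.mkₐ K (Ideal.span {(X i - C c : MvPolynomial (Fin n) K)})).comp (sb i c) := by
    ext l
    by_cases h : l = i
    · subst h
      simp only [AlgHom.comp_apply, sb_X_self, Ideal.Quotient.mkₐ_eq_mk]
      rw [Ideal.Quotient.eq]
      exact Ideal.mem_span_singleton_self _
    · simp [sb_X_ne _ _ h]
  exact DFunLike.congr_fun this f

theorem dvd_iff_sb (i : Fin n) (c : K) (f : MvPolynomial (Fin n) K) :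
    (X i - C c) ∣ f ↔ sb i c f = 0 := by
  constructor
  · rintro ⟨g, rfl⟩; simp
  · intro h
    have := dvd_sub_sb i c f
    simpa [h] using this

theorem exists_factor (i : Fin n) (c : K) {P : MvPolynomial (Fin n) K} (hP : P ≠ 0) :
    ∃ (m : ℕ) (R : MvPolynomial (Fin n) K), P = (X i - C c) ^ m * R ∧ sb i c R ≠ 0 := by
  obtain ⟨m, R, h1, h2⟩ := WfDvdMonoid.max_power_factor' (a₀ := P) (x := X i - C c) hP (by
    intro hu
    have := hu.map (sb i c)
    simp at this)
  exact ⟨m, R, h2, fun h => h1 ((dvd_iff_sb i c R).2 h)⟩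

theorem sb_monomial (i : Fin n) (c : K) (m : Fin n →₀ ℕ) (a : K) :
    sb i c (monomial m a) = monomial (m.erase i) (a * c ^ m i) := by
  rw [monomial_eq, map_mul, sb_C, Finsupp.prod_fintype _ _ (by simp), map_prod, monomial_eq, 
    Finsupp.prod_fintype _ _ (by simp),
    ← Finset.mul_prod_erase _ _ (Finset.mem_univ i), ← Finset.mul_prod_erase _ (fun _ => _ ^ _) (Finset.mem_univ i)]
  have : ∀ l ∈ Finset.univ.erase i, sb i c (X l ^ m l) = X l ^ (m.erase i) l := by
    intro l hl
    have hl' := Finset.ne_of_mem_erase hl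
    rw [map_pow, sb_X_ne _ _ hl', Finsupp.erase_ne hl']
  rw [Finset.prod_congr rfl this]
  simp [mul_assoc]

theorem coeff_sb_ne {i : Fin n} {c : K} {q : MvPolynomial (Fin n) K} {k : Fin n →₀ ℕ}
    (h : coeff k (sb i c q) ≠ 0) :
    ∃ m, coeff m q ≠ 0 ∧ m.erase i = k ∧ (c = 0 → m i = 0) := by
  rw [q.as_sum, map_sum, coeff_sum] at h
  obtain ⟨m, hm, hne⟩ := Finset.exists_ne_zero_of_sum_ne_zero h
  rw [sb_monomial, coeff_monomial] at hne
  split_ifs at hne with h1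
  · refine ⟨m, mem_support_iff.1 hm, h1, fun hc => ?_⟩
    by_contra h2
    simp [hc, h2] at hne
  · simp at hne

theorem tr_sb (z : Fin n → K) (i : Fin n) (c : K) (f : MvPolynomial (Fin n) K) :
    tr z (sb i c f) = sb i (c - z i) (tr z f) := by
  have : (tr z).comp (sb i c) = (sb i (c - z i)).comp (tr z) := by
    ext l
    by_cases h : l = i
    · subst h; simp
    · simp [sb_X_ne _ _ h]
  exact DFunLike.congr_fun this f

theorem erase_add_single' (m : Fin n →₀ ℕ) (i : Fin n) : m.erase i + Finsupp.single i (m i) = m := by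
  ext l
  by_cases h : l = i
  · subst h; simp
  · simp [Finsupp.erase_ne h, Finsupp.single_apply, Ne.symm h]

/-- restriction lemma -/
theorem sb_II {d : Fin n → ℕ} {θ : ℕ} {z : Fin n → K} {a : ℚ} {f : MvPolynomial (Fin n) K}
    (hf : f ∈ II d θ z a) (i : Fin n) (c : K) (E : ℕ) (hE : degreeOf i f ≤ E) :
    sb i c f ∈ II d θ z (a - (E : ℚ) / d i) := by
  intro k hk
  rw [tr_sb] at hk
  obtain ⟨m, hm, rfl, -⟩ := coeff_sb_ne hk
  have h1 := hf m hm
  have h2 : tr z f ∈ UU K (fun l => degreeOf l f) := UU_tr z (fun l => le_rfl)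
  have h3 : m i ≤ E := (mem_UU'.1 h2 m hm i).trans hE
  have h4 : m = m.erase i + Finsupp.single i (m i) := (erase_add_single' m i).symm
  have h5 : phi d θ m = phi d θ (m.erase i) + min ((m i : ℚ) / d i) θ := by
    conv_lhs => rw [h4]
    exact phi_add_single d θ _ i _ (by simp)
  have h6 : min ((m i : ℚ) / d i) (θ : ℚ) ≤ E / d i := (min_le_left _ _).trans (by gcongr)
  linarith

theorem sb_II_self {d : Fin n → ℕ} {θ : ℕ} {z : Fin n → K} {a : ℚ} {R : MvPolynomial (Fin n) K}
    (i : Fin n) (m : ℕ) 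
    (hf : (X i - C (z i)) ^ m * R ∈ II d θ z a) :
    sb i (z i) R ∈ II d θ z (a - (m : ℚ) / d i) := by
  intro k hk
  rw [tr_sb, sub_self] at hk
  obtain ⟨m', hm, rfl, h0⟩ := coeff_sb_ne hk
  have h0 := h0 rfl
  have h1 : tr z ((X i - C (z i)) ^ m * R) = monomial (Finsupp.single i m) 1 * tr z R := by
    simp [X_pow_eq_monomial]
  have h2 := hf (m' + Finsupp.single i m) (by
    rw [h1, add_comm, coeff_monomial_mul]; simpa using hm)
  rw [phi_add_single _ _ _ _ _ h0] at h2
  have h6 : min ((m : ℚ) / d i) (θ : ℚ) ≤ m / d i := min_le_left _ _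
  have h4 : m'.erase i = m' := by
    have := erase_add_single' m' i
    rw [h0] at this; simpa using this
  rw [h4]
  linarith

theorem II_pow_mul {d : Fin n → ℕ} {θ : ℕ} {z : Fin n → K} {a : ℚ} {b : MvPolynomial (Fin n) K}
    (hb : b ∈ II d θ z a) (i : Fin n) (hi : degreeOf i b = 0) (hd : 0 < d i) :
    (X i - C (z i)) ^ (θ * d i) * b ∈ II d θ z (a + θ) := by
  intro k hk
  have h1 : tr z ((X i - C (z i)) ^ (θ * d i) * b) = monomial (Finsupp.single i (θ * d i)) 1 * tr z b := by
    simp [X_pow_eq_monomial]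
  rw [h1, coeff_monomial_mul'] at hk
  split_ifs at hk with h2
  · rw [one_mul] at hk
    have h3 := hb _ hk
    have h4 : tr z b ∈ UU K (fun l => degreeOf l b) := UU_tr z (fun l => le_rfl)
    have h5 : (k - Finsupp.single i (θ * d i)) i = 0 := by
      have := mem_UU'.1 h4 _ hk i
      simpa [hi] using this
    have h6 : k = (k - Finsupp.single i (θ * d i)) + Finsupp.single i (θ * d i) :=
      (tsub_add_cancel_of_le h2).symm
    rw [h6, phi_add_single _ _ _ _ _ h5]
    have h7 : ((θ * d i : ℕ) : ℚ) / d i = θ := by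
      push_cast
      field_simp
    rw [h7, min_self]
    linarith
  · simp at hk

theorem II_cancel {d : Fin n → ℕ} {θ : ℕ} {z : Fin n → K} {a : ℚ} {f : MvPolynomial (Fin n) K}
    (i : Fin n) (c : K) (hc : c ≠ z i) (hf : (X i - C c) * f ∈ II d θ z a) : f ∈ II d θ z a := by
  have key : ∀ N : ℕ, ∀ k : Fin n →₀ ℕ, k i = N → phi d θ k < a → coeff k (tr z f) = 0 := by
    intro N
    induction N with
    | zero =>
      intro k hk hlt
      by_contra hne
      refine absurd (hf k ?_) (not_le.2 hlt)
      have : tr z ((X i - C c) * f) = X i * tr z f + C (z i - c) * tr z f := by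
        simp; ring
      rw [this, coeff_add, coeff_C_mul, coeff_X_mul', if_neg (by simp [hk]), zero_add]
      exact mul_ne_zero (sub_ne_zero.2 hc.symm) hne
    | succ N ih =>
      intro k hk hlt
      by_contra hne
      refine absurd (hf k ?_) (not_le.2 hlt)
      have : tr z ((X i - C c) * f) = X i * tr z f + C (z i - c) * tr z f := by
        simp; ring
      rw [this, coeff_add, coeff_C_mul, coeff_X_mul', if_pos (by simp [hk]),
        ih (k - Finsupp.single i 1) (by simp [hk]) ((phi_mono d θ tsub_le_self).trans_lt hlt), zero_add]
      exact mul_ne_zero (sub_ne_zero.2 hc.symm) hne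
  intro k hk
  by_contra h
  exact hk (key _ k rfl (not_le.1 h))

theorem II_cancel_pow {d : Fin n → ℕ} {θ : ℕ} {z : Fin n → K} {a : ℚ} {f : MvPolynomial (Fin n) K}
    (i : Fin n) (c : K) (hc : c ≠ z i) (m : ℕ) (hf : (X i - C c) ^ m * f ∈ II d θ z a) :
    f ∈ II d θ z a := by
  induction m with
  | zero => simpa using hf
  | succ m ih =>
    rw [pow_succ', mul_assoc] at hf
    exact ih (II_cancel i c hc hf)

theorem tr_pderiv (z : Fin n → K) (i : Fin n) (f : MvPolynomial (Fin n) K) :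
    tr z (pderiv i f) = pderiv i (tr z f) := by
  induction f using MvPolynomial.induction_on with
  | C a => simp
  | add p q hp hq => simp [hp, hq]
  | mul_X p l hp =>
    simp only [Derivation.leibniz, map_add, map_mul, smul_eq_mul, hp, tr_X, pderiv_C, pderiv_X]
    congr 1
    simp [Pi.single_apply]

theorem II_euler {d : Fin n → ℕ} {θ : ℕ} {z : Fin n → K} {a : ℚ} {f : MvPolynomial (Fin n) K}
    (hf : f ∈ II d θ z a) (i : Fin n) : (X i - C (z i)) * pderiv i f ∈ II d θ z a := by
  intro k hk
  have h1 : tr z ((X i - C (z i)) * pderiv i f) = X i * pderiv i (tr z f) := by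
    simp [tr_pderiv]
  rw [h1] at hk
  apply hf
  intro h0
  apply hk
  rw [coeff_X_mul']
  split_ifs with h2
  · rw [coeff_pderiv]
    have h3 : Finsupp.single i 1 ≤ k := by
      rw [Finsupp.single_le_iff]
      have := Finsupp.mem_support_iff.1 h2
      omega
    rw [tsub_add_cancel_of_le h3, h0]
    simp
  · rfl

end
end Dys
set_option linter.unusedSimpArgs false
namespace Dys
open MvPolynomial
section
variable {K : Type*} [Field K] {n : ℕ}

noncomputable def AA {m : ℕ} (ζ : Fin (m + 2) → Fin n → K) (i : Fin n) : MvPolynomial (Fin n) K :=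
  ∏ j, (X i - C (ζ j i))

theorem AA_aux (i : Fin n) : ∀ (M : ℕ) (c : Fin (M + 1) → K), ∃ B ∈ UU K (Pi.single i M : Fin n → ℕ),
    ∏ j, (X i - C (c j) : MvPolynomial (Fin n) K) = X i ^ (M + 1) + B := by
  intro M
  induction M with
  | zero =>
    intro c
    refine ⟨C (- c 0), UU_C _ _, ?_⟩
    simp [sub_eq_add_neg]
  | succ M ih =>
    intro c
    obtain ⟨B, hB, h⟩ := ih (fun j => c j.succ)
    refine ⟨X i * B + C (- c 0) * (X i ^ (M + 1) + B), ?_, ?_⟩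
    · refine add_mem ?_ ?_
      · refine UU_mono ?_ (UU_mul (UU_X i) hB)
        intro l
        by_cases hl : l = i
        · subst hl; simp; omega
        · simp [hl]
      · rw [← smul_eq_C_mul]
        refine Submodule.smul_mem _ _ (add_mem ?_ ?_)
        · refine UU_mono ?_ (UU_pow (UU_X i) _)
          intro l
          by_cases hl : l = i
          · subst hl; simp
          · simp [hl]
        · refine UU_mono ?_ hB
          intro l
          by_cases hl : l = i
          · subst hl; simp
          · simp [hl]
    · rw [Fin.prod_univ_succ, h]
      simp
      ring

theorem pderiv_swap (i l : Fin n) (f : MvPolynomial (Fin n) K) :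
    pderiv i (pderiv l f) = pderiv l (pderiv i f) := by
  ext k
  simp only [coeff_pderiv]
  by_cases h : i = l
  · subst h; rfl
  · rw [add_right_comm]
    simp [Finsupp.single_apply, h, Ne.symm h]
    ring

theorem UU_pderiv {D : Fin n → ℕ} {f : MvPolynomial (Fin n) K} (hf : f ∈ UU K D) (i : Fin n) :
    pderiv i f ∈ UU K (Function.update D i (D i - 1)) := by
  rw [mem_UU'] at *
  intro k hk l
  rw [coeff_pderiv] at hk
  have := hf _ (left_ne_zero_of_mul hk) l
  by_cases h : l = i
  · subst h
    simp at this ⊢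
    omega
  · simp [h, Finsupp.single_apply, Ne.symm h] at this ⊢
    exact this

theorem pderiv_eq_zero_of_UU {D : Fin n → ℕ} {f : MvPolynomial (Fin n) K} (hf : f ∈ UU K D) (i : Fin n)
    (hi : D i = 0) : pderiv i f = 0 := by
  ext k
  rw [coeff_pderiv]
  by_contra hk
  have := mem_UU'.1 hf _ (left_ne_zero_of_mul (by simpa using hk)) i
  simp [hi] at this

theorem UU_euler {D : Fin n → ℕ} {f : MvPolynomial (Fin n) K} (hf : f ∈ UU K D) (i : Fin n)
    (hi : 0 < D i) :
    X i * pderiv i f - C ((D i : ℕ) : K) * f ∈ UU K (Function.update D i (D i - 1)) := by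
  rw [mem_UU']
  intro k hk l
  have h1 : coeff k (X i * pderiv i f - C ((D i : ℕ) : K) * f) = ((k i : K) - (D i : K)) * coeff k f := by
    rw [coeff_sub, coeff_C_mul, coeff_X_mul']
    split_ifs with h
    · have h3 : Finsupp.single i 1 ≤ k := by
        rw [Finsupp.single_le_iff]
        have := Finsupp.mem_support_iff.1 h
        omega
      have h4 : ((k - Finsupp.single i 1 : Fin n →₀ ℕ) i + 1 : ℕ) = k i := by
        have : 1 ≤ k i := by simpa using h3 i
        simp; omega
      rw [coeff_pderiv, tsub_add_cancel_of_le h3]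
      have h5 : (((k - Finsupp.single i 1 : Fin n →₀ ℕ) i : ℕ) : K) + 1 = (k i : K) := by exact_mod_cast congrArg (Nat.cast : ℕ → K) h4
      rw [h5]; ring
    · have : k i = 0 := by simpa using h
      simp [this]
  rw [h1] at hk
  have h2 := mem_UU'.1 hf k (right_ne_zero_of_mul hk) l
  by_cases h : l = i
  · subst h
    have h3 : k l ≠ D l := by
      intro h3
      simp [h3] at hk
    simp; omega
  · simpa [h] using h2

theorem UU_op {m : ℕ} (ζ : Fin (m + 2) → Fin n → K) {D : Fin n → ℕ} {f : MvPolynomial (Fin n) K}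
    (hf : f ∈ UU K D) (i : Fin n) (hi : 0 < D i) :
    AA ζ i * pderiv i f - C ((D i : ℕ) : K) * X i ^ (m + 1) * f ∈ UU K (D + Pi.single i m) := by
  obtain ⟨B, hB, h⟩ := AA_aux i (m + 1) (fun j => ζ j i)
  have : AA ζ i * pderiv i f - C ((D i : ℕ) : K) * X i ^ (m + 1) * f =
      X i ^ (m + 1) * (X i * pderiv i f - C ((D i : ℕ) : K) * f) + B * pderiv i f := by
    unfold AA
    rw [h]; ring
  rw [this]
  refine add_mem ?_ ?_
  · refine UU_mono ?_ (UU_mul (UU_pow (UU_X i) _) (UU_euler hf i hi))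
    intro l
    by_cases h : l = i
    · subst h; simp; omega
    · simp [h]
  · refine UU_mono ?_ (UU_mul hB (UU_pderiv hf i))
    intro l
    by_cases h : l = i
    · subst h; simp; omega
    · simp [h]

theorem deriv_aeval {F : Type*} [Field F] [Algebra K F] (δ : Derivation K F F) (p : Fin n → F)
    (f : MvPolynomial (Fin n) K) :
    δ (aeval p f) = ∑ i, aeval p (pderiv i f) * δ (p i) := by
  induction f using MvPolynomial.induction_on with
  | C a => simp
  | add p q hp hq => simp [hp, hq, add_mul, Finset.sum_add_distrib]
  | mul_X q l hq =>
    simp only [map_mul, Derivation.leibniz, hq, smul_eq_mul, map_add, aeval_X, pderiv_X, add_mul,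
      Finset.sum_add_distrib, Finset.mul_sum]
    congr 1
    · rw [Finset.sum_eq_single l]
      · simp
      · intro b _ hb
        simp [Pi.single_eq_of_ne hb.symm]
      · simp
    · refine Finset.sum_congr rfl fun i _ => by ring

theorem aeval_congr_of_UU {F : Type*} [Field F] [Algebra K F] {D : Fin n → ℕ}
    {f : MvPolynomial (Fin n) K} (hf : f ∈ UU K D) (i : Fin n)
    (hi : D i = 0) (p p' : Fin n → F) (h : ∀ l, l ≠ i → p l = p' l) : aeval p f = aeval p' f := by
  rw [f.as_sum, map_sum, map_sum]
  refine Finset.sum_congr rfl fun k hk => ?_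
  rw [aeval_monomial, aeval_monomial]
  congr 1
  refine Finsupp.prod_congr fun l hl => ?_
  by_cases h' : l = i
  · subst h'
    have := mem_UU'.1 hf k (mem_support_iff.1 hk) l
    have : k l = 0 := by omega
    simp [this]
  · rw [h l h']

/-- univariate specialization -/
noncomputable def uni {F : Type*} [Field F] [Algebra K F] (i : Fin n) (p : Fin n → F) :
    MvPolynomial (Fin n) K →ₐ[K] Polynomial F :=
  aeval (Function.update (fun l => Polynomial.C (p l)) i Polynomial.X)

theorem uni_eval {F : Type*} [Field F] [Algebra K F] (i : Fin n) (p : Fin n → F) (y : F)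
    (f : MvPolynomial (Fin n) K) :
    (uni i p f).eval y = aeval (Function.update p i y) f := by
  have : ((Polynomial.aeval y).restrictScalars K : Polynomial F →ₐ[K] F).comp (uni i p) = aeval (Function.update p i y) := by
    ext l
    by_cases h : l = i
    · subst h; simp [uni]
    · simp [uni, h]
  rw [← this]
  simp [Polynomial.aeval_def, Polynomial.eval₂_eq_eval_map]

theorem uni_deriv {F : Type*} [Field F] [Algebra K F] (i : Fin n) (p : Fin n → F)
    (f : MvPolynomial (Fin n) K) :
    Polynomial.derivative (uni i p f) = uni i p (pderiv i f) := by
  induction f using MvPolynomial.induction_on with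
  | C a => simp [uni, Polynomial.algebraMap_apply]
  | add p q hp hq => simp [hp, hq]
  | mul_X q l hq =>
    simp only [map_mul, Derivation.leibniz, hq, smul_eq_mul, map_add, Polynomial.derivative_mul, pderiv_X]
    rw [add_comm]
    congr 1
    · congr 1
      by_cases h : l = i
      · subst h; simp [uni]
      · simp [uni, h, Pi.single_eq_of_ne (Ne.symm h)]
    · ring

theorem uni_iterate {F : Type*} [Field F] [Algebra K F] (i : Fin n) (p : Fin n → F) (k : ℕ)
    (f : MvPolynomial (Fin n) K) :
    Polynomial.derivative^[k] (uni i p f) = uni i p ((pderiv i)^[k] f) := by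
  induction k with
  | zero => rfl
  | succ k ih => rw [Function.iterate_succ_apply', ih, uni_deriv, Function.iterate_succ_apply']

theorem uni_natDegree {F : Type*} [Field F] [Algebra K F] (i : Fin n) (p : Fin n → F)
    {D : Fin n → ℕ} {f : MvPolynomial (Fin n) K} (hf : f ∈ UU K D) :
    (uni i p f).natDegree ≤ D i := by
  rw [f.as_sum, map_sum]
  refine Polynomial.natDegree_sum_le_of_forall_le _ _ fun k hk => ?_
  have hk' := mem_UU'.1 hf k (mem_support_iff.1 hk) i
  refine le_trans ?_ hk'
  unfold uni
  rw [aeval_monomial, Polynomial.algebraMap_apply, Finsupp.prod_fintype _ _ (by simp)]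
  refine (Polynomial.natDegree_C_mul_le _ _).trans ?_
  refine (Polynomial.natDegree_prod_le _ _).trans ?_
  rw [Finset.sum_eq_single i]
  · simp
  · intro b _ hb
    rw [Function.update_of_ne hb, ← Polynomial.C_pow, Polynomial.natDegree_C]
  · simp

/-- Main vanishing lemma behind the base locus statement. -/
theorem base_aux [CharZero K] {m : ℕ} (ζ : Fin (m + 2) → Fin n → K)
    (J : Ideal (MvPolynomial (Fin n) K)) (hJ : ∀ f ∈ J, ∀ i, AA ζ i * pderiv i f ∈ J)
    (E : Fin n → ℕ) (P : MvPolynomial (Fin n) K) (hP0 : P ≠ 0) (hPE : P ∈ UU K E) (hPJ : P ∈ J)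
    {F : Type*} [Field F] [Algebra K F] (z : Fin n → F)
    (hz : ∀ i, E i ≠ 0 → Transcendental K (z i))
    (hW : ∀ f ∈ J, f ∈ UU K (fun i => if E i = 0 then 0 else E i + m * ∑ l ∈ Finset.Ioi i, E l) →
      aeval z f = 0) : False := by
  classical
  let S : ℕ → Fin n → ℕ := fun r i => ∑ l ∈ (Finset.Ioi i).filter (fun l => l.val < r), E l
  let p : ℕ → (Fin n → K) → Fin n → F := fun r y i => if i.val < r then z i else algebraMap K F (y i)
  have hAA : ∀ i, E i ≠ 0 → ∀ q : Fin n → F, q i = z i → aeval q (AA ζ i) ≠ 0 := by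
    intro i hi q hq
    unfold AA
    rw [map_prod]
    refine Finset.prod_ne_zero_iff.2 fun j _ => ?_
    simp only [map_sub, aeval_X, hq, aeval_C]
    rw [sub_ne_zero]
    intro h
    refine hz i hi ?_
    rw [h]
    exact isAlgebraic_algebraMap _
  have claim : ∀ r, r ≤ n → ∀ α : Fin n → ℕ, (∀ i, i.val < r → α i ≤ S r i) → (∀ i : Fin n, r ≤ i.val → α i = 0) →
      (∀ i, E i = 0 → α i = 0) → ∀ f ∈ J, f ∈ UU K (fun i => E i + m * α i) → ∀ y, aeval (p r y) f = 0 := by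
    intro r hr
    induction hr using Nat.decreasingInduction with
    | self =>
      intro α h1 h2 h3 f hfJ hf y
      have : p n y = z := by ext i; simp [p]
      rw [this]
      refine hW f hfJ (UU_mono ?_ hf)
      intro i
      split_ifs with h
      · simp [h, h3 i h]
      · have h4 := h1 i i.2
        have h5 : S n i = ∑ l ∈ Finset.Ioi i, E l := by simp [S]
        rw [← h5]
        gcongr
    | of_succ r hr ih =>
      have hr' : r < n := hr
      intro α h1 h2 h3 f hfJ hf y
      let ρ : Fin n := ⟨r, hr'⟩
      have hSle : ∀ i, S r i ≤ S (r + 1) i := by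
        intro i
        refine Finset.sum_le_sum_of_subset fun l hl => ?_
        simp only [Finset.mem_filter] at hl ⊢
        exact ⟨hl.1, by omega⟩
      have hSeq : ∀ i : Fin n, i.val < r → S (r + 1) i = S r i + E ρ := by
        intro i hi
        have : (Finset.Ioi i).filter (fun l => l.val < r + 1) =
            insert ρ ((Finset.Ioi i).filter (fun l => l.val < r)) := by
          ext l
          simp only [Finset.mem_filter, Finset.mem_insert, Finset.mem_Ioi, Fin.lt_def, Fin.ext_iff, ρ]
          omega
        simp only [S]
        rw [this, Finset.sum_insert (by simp [ρ])]
        ring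
      have hp : Function.update (p (r + 1) y) ρ (algebraMap K F (y ρ)) = p r y := by
        ext l
        by_cases h : l = ρ
        · subst h; simp [p, ρ]
        · have : l.val ≠ r := fun h' => h (Fin.ext h')
          simp only [Function.update_of_ne h, p]
          have : l.val < r + 1 ↔ l.val < r := by omega
          simp [this]
      by_cases hE : E ρ = 0
      · have h0 : E ρ + m * α ρ = 0 := by simp [hE, h3 ρ hE]
        rw [aeval_congr_of_UU hf ρ h0 (p r y) (p (r + 1) y)]
        · refine ih α ?_ (fun i hi => h2 i (by omega)) h3 f hfJ hf y
          intro i hi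
          by_cases h : i.val < r
          · exact (h1 i h).trans (hSle i)
          · rw [h2 i (by omega)]; exact Nat.zero_le _
        · intro l hl
          rw [← hp, Function.update_of_ne hl]
      · obtain ⟨δ, hδ⟩ := exists_deriv (K := K) (z ρ) (hz ρ hE)
        have hpρ : p (r + 1) y ρ = z ρ := by simp [p, ρ]
        have sub : ∀ k, k ≤ E ρ → ∀ α : Fin n → ℕ, (∀ i : Fin n, i.val < r → E i ≠ 0 → α i + k ≤ S (r + 1) i) →
            (∀ i : Fin n, r ≤ i.val → α i = 0) → (∀ i, E i = 0 → α i = 0) →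
            ∀ f ∈ J, f ∈ UU K (fun i => E i + m * α i) → aeval (p (r + 1) y) ((pderiv ρ)^[k] f) = 0 := by
          intro k
          induction k with
          | zero =>
            intro _ α g1 g2 g3 f hfJ hf
            refine ih α ?_ (fun i hi => g2 i (by omega)) g3 f hfJ hf y
            intro i hi
            by_cases h : i.val < r
            · by_cases hEi : E i = 0
              · rw [g3 i hEi]; exact Nat.zero_le _
              · exact g1 i h hEi
            · rw [g2 i (by omega)]; exact Nat.zero_le _
          | succ k ihk =>
            intro hk α g1 g2 g3 f hfJ hf
            have e0 : aeval (p (r + 1) y) ((pderiv ρ)^[k] f) = 0 :=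
              ihk (by omega) α (fun i hi hi' => by have := g1 i hi hi'; omega) g2 g3 f hfJ hf
            have comm : ∀ (i : Fin n) (k : ℕ) (g : MvPolynomial (Fin n) K),
                pderiv i ((pderiv ρ)^[k] g) = (pderiv ρ)^[k] (pderiv i g) := by
              intro i k
              induction k with
              | zero => intro g; rfl
              | succ k ihc =>
                intro g
                rw [Function.iterate_succ_apply, ihc, Function.iterate_succ_apply, pderiv_swap i ρ]
            have pulls : ∀ (q : MvPolynomial (Fin n) K), pderiv ρ q = 0 → ∀ (k : ℕ) (g : MvPolynomial (Fin n) K),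
                (pderiv ρ)^[k] (q * g) = q * (pderiv ρ)^[k] g := by
              intro q hq k
              induction k with
              | zero => intro g; rfl
              | succ k ihc =>
                intro g
                rw [Function.iterate_succ_apply', ihc, Function.iterate_succ_apply',
                  Derivation.leibniz, hq]
                simp
            have iadd : ∀ (k : ℕ) (a b : MvPolynomial (Fin n) K),
                (pderiv ρ)^[k] (a - b) = (pderiv ρ)^[k] a - (pderiv ρ)^[k] b := by
              intro k
              induction k with
              | zero => intro a b; rfl
              | succ k ihc => intro a b; simp only [Function.iterate_succ_apply, map_sub, ihc]
            have vanish : ∀ i : Fin n, i.val < r → aeval (p (r + 1) y) (pderiv i ((pderiv ρ)^[k] f)) = 0 := by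
              intro i hi
              have hiρ : i ≠ ρ := by
                intro h; rw [h] at hi; simp [ρ] at hi
              rw [comm]
              by_cases hEi : E i = 0
              · rw [pderiv_eq_zero_of_UU hf i (by simp [hEi, g3 i hEi])]
                rw [iterate_map_zero]; simp
              · set D : ℕ := E i + m * α i with hD
                have o1 : AA ζ i * pderiv i f - C ((D : ℕ) : K) * X i ^ (m + 1) * f ∈ J :=
                  sub_mem (hJ f hfJ i) (J.mul_mem_left _ hfJ)
                have o2 := UU_op ζ hf i (by omega)
                have o3 := ihk (by omega) (α + Pi.single i 1) (by
                  intro l hl hl'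
                  have := g1 l hl hl'
                  by_cases h : l = i
                  · subst h; simp; omega
                  · simp [h]; omega) (by
                  intro l hl
                  have : l ≠ i := by rintro rfl; omega
                  simp [this, g2 l hl]) (by
                  intro l hl
                  have : l ≠ i := by rintro rfl; exact hEi hl
                  simp [this, g3 l hl]) _ o1 (UU_mono (by
                    intro l
                    by_cases h : l = i
                    · subst h; simp; ring_nf; rfl
                    · simp [h]) o2)
                have dA : pderiv ρ (AA ζ i) = 0 := by
                  obtain ⟨B, hB, h⟩ := AA_aux i (m + 1) (fun j => ζ j i)
                  refine pderiv_eq_zero_of_UU (D := Pi.single i (m + 2)) ?_ ρ (by simp [Ne.symm hiρ])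
                  unfold AA
                  rw [h]
                  refine add_mem (UU_mono ?_ (UU_pow (UU_X i) _)) (UU_mono ?_ hB)
                  · intro l; by_cases hl : l = i
                    · subst hl; simp
                    · simp [hl]
                  · intro l; by_cases hl : l = i
                    · subst hl; simp
                    · simp [hl]
                have dX : pderiv ρ (C ((D : ℕ) : K) * X i ^ (m + 1) : MvPolynomial (Fin n) K) = 0 := by
                  simp [Derivation.leibniz, Derivation.leibniz_pow, pderiv_X_of_ne hiρ]
                rw [iadd, pulls _ dA, pulls _ dX, map_sub, map_mul, map_mul, e0, mul_zero, sub_zero] at o3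
                exact (mul_eq_zero.1 o3).resolve_left (hAA i hEi _ (by simp [p]; intro h; omega))
            have e1 := deriv_aeval δ (p (r + 1) y) ((pderiv ρ)^[k] f)
            rw [e0, map_zero, Finset.sum_eq_single ρ] at e1
            · rw [hpρ] at e1
              rw [Function.iterate_succ_apply']
              exact (mul_eq_zero.1 e1.symm).resolve_right hδ
            · intro i _ hi
              have hir : i.val ≠ r := fun h => hi (Fin.ext h)
              by_cases h : i.val < r
              · rw [vanish i h, zero_mul]
              · have : p (r + 1) y i = algebraMap K F (y i) := by
                  simp only [p]; rw [if_neg (by omega)]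
                rw [this]; simp
            · simp
        have hα : ∀ i : Fin n, r ≤ i.val → α i = 0 := h2
        have sub' : ∀ k, k ≤ E ρ → aeval (p (r + 1) y) ((pderiv ρ)^[k] f) = 0 := by
          intro k hk
          refine sub k hk α ?_ h2 h3 f hfJ hf
          intro i hi _
          have := h1 i hi
          rw [hSeq i hi]; omega
        let g := uni ρ (p (r + 1) y) f
        have hg0 : g = 0 := by
          by_contra hne
          have d1 : g.natDegree ≤ E ρ := by
            have := uni_natDegree ρ (p (r + 1) y) hf
            simpa [h2 ρ le_rfl] using this
          have d2 : E ρ < g.rootMultiplicity (z ρ) := by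
            have : CharZero F := charZero_of_injective_algebraMap (algebraMap K F).injective
            refine Polynomial.lt_rootMultiplicity_of_isRoot_iterate_derivative hne ?_
            intro k hk
            rw [Polynomial.IsRoot, uni_iterate, uni_eval]
            rw [← hpρ, Function.update_eq_self]
            exact sub' k hk
          have d3 : g.rootMultiplicity (z ρ) ≤ g.natDegree := by
            have := Polynomial.count_roots (a := z ρ) g
            rw [← this]
            exact (Multiset.count_le_card _ _).trans (Polynomial.card_roots' g)
          omega
        have := uni_eval ρ (p (r + 1) y) (algebraMap K F (y ρ)) f
        rw [hp] at this
        rw [← this]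
        change g.eval _ = 0
        rw [hg0]; simp
  apply hP0
  apply MvPolynomial.funext
  intro y
  have h := claim 0 (Nat.zero_le _) 0 (by simp) (by simp) (by simp) P hPJ (by simpa using hPE) y
  have hp0 : p 0 y = fun i => algebraMap K F (y i) := by ext i; simp [p]
  rw [hp0] at h
  have h' : algebraMap K F (eval y P) = 0 := by
    rw [← h]
    rw [← MvPolynomial.coe_aeval_eq_eval]
    exact (MvPolynomial.aeval_algebraMap_apply F y P).symm
  simpa using h'
end
end Dys
set_option linter.unusedSimpArgs false
namespace Dys
open MvPolynomial
section
variable {K : Type*} [Field K] {n : ℕ}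

def linSet (K : Type*) [Field K] {n : ℕ} (s : Finset (Fin n)) : Set (MvPolynomial (Fin n) K) :=
  {f | ∃ i ∈ s, ∃ c : K, f = X i - C c}

theorem base_locus [CharZero K] [IsAlgClosed K] {m : ℕ} (ζ : Fin (m + 2) → Fin n → K)
    (J : Ideal (MvPolynomial (Fin n) K)) (hJ : ∀ f ∈ J, ∀ i, AA ζ i * pderiv i f ∈ J)
    (s : Finset (Fin n)) (E : Fin n → ℕ) (hEs : ∀ i, i ∈ s ↔ E i ≠ 0)
    (P : MvPolynomial (Fin n) K) (hP0 : P ≠ 0) (hPE : P ∈ UU K E) (hPJ : P ∈ J) :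
    ∃ h ∈ Submonoid.closure (linSet K s), h ∈ Ideal.span {f | f ∈ J ∧
      f ∈ UU K (fun i => if E i = 0 then 0 else E i + m * ∑ l ∈ Finset.Ioi i, E l)} := by
  classical
  set W := {f | f ∈ J ∧
      f ∈ UU K (fun i => if E i = 0 then 0 else E i + m * ∑ l ∈ Finset.Ioi i, E l)} with hWdef
  have key : ∀ p : Ideal (MvPolynomial (Fin n) K), p.IsPrime → Ideal.span W ≤ p →
      ∃ f ∈ linSet K s, f ∈ p := by
    intro p hp hWp
    by_contra hcon
    let F := FractionRing (MvPolynomial (Fin n) K ⧸ p)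
    let q : MvPolynomial (Fin n) K →ₐ[K] F :=
      (IsScalarTower.toAlgHom K (MvPolynomial (Fin n) K ⧸ p) F).comp (Ideal.Quotient.mkₐ K p)
    have hq : ∀ f, q f = 0 ↔ f ∈ p := by
      intro f
      have : q f = algebraMap (MvPolynomial (Fin n) K ⧸ p) F (Ideal.Quotient.mk p f) := rfl
      rw [this, FaithfulSMul.algebraMap_eq_zero_iff, Ideal.Quotient.eq_zero_iff_mem]
    have hqa : ∀ f, aeval (fun i => q (X i)) f = q f := by
      intro f
      have : aeval (fun i => q (X i)) = q := by ext i; simp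
      rw [this]
    refine base_aux ζ J hJ E P hP0 hPE hPJ (fun i => q (X i)) ?_ ?_
    · intro i hi halg
      apply hcon
      have h1 := minpoly.irreducible halg.isIntegral
      have h2 := IsAlgClosed.degree_eq_one_of_irreducible K h1
      obtain ⟨c, hc⟩ := minpoly.mem_range_of_degree_eq_one K _ h2
      refine ⟨X i - C c, ⟨i, (hEs i).2 hi, c, rfl⟩, ?_⟩
      rw [← hq, map_sub]
      have : q (C c) = algebraMap K F c := q.commutes c
      rw [this, hc]
      exact sub_self _
    · intro f hfJ hf
      rw [hqa, hq]
      exact hWp (Ideal.subset_span ⟨hfJ, hf⟩)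
  have hfin := Ideal.finite_minimalPrimes_of_isNoetherianRing (MvPolynomial (Fin n) K) (Ideal.span W)
  have key2 : ∀ p ∈ (Ideal.span W).minimalPrimes, ∃ f ∈ linSet K s, f ∈ p :=
    fun p hp => key p hp.1.1 hp.1.2
  choose! g hg1 hg2 using key2
  have h0 : ∏ p ∈ hfin.toFinset, g p ∈ (Ideal.span W).radical := by
    rw [← Ideal.sInf_minimalPrimes, Ideal.mem_sInf]
    intro p hp
    have : g p ∣ ∏ p ∈ hfin.toFinset, g p := Finset.dvd_prod_of_mem _ (by simpa using hp)
    exact Ideal.mem_of_dvd _ this (hg2 p hp)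
  obtain ⟨k, hk⟩ := h0
  refine ⟨_, ?_, hk⟩
  refine Submonoid.pow_mem _ (Submonoid.prod_mem _ fun p hp => Submonoid.subset_closure (hg1 p (by simpa using hp))) _

/- Adm / IND -/
def onS {n : ℕ} (s : Finset (Fin n)) (D : Fin n → ℕ) : Fin n → ℕ := fun i => if i ∈ s then D i else 0

def ee {n : ℕ} (m : ℕ) (d : Fin n → ℕ) (s : Finset (Fin n)) (i : Fin n) : ℕ :=
  d i + m * ∑ l ∈ s.filter (fun l => i < l), d l

def Adm {m : ℕ} (d : Fin n → ℕ) (ζ : Fin (m + 2) → Fin n → K) (s : Finset (Fin n)) (t : Fin (m + 2) → ℚ) : Prop :=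
  ∃ N : ℕ, 0 < N ∧ ∃ P : MvPolynomial (Fin n) K, P ≠ 0 ∧ P ∈ UU K (onS s (fun i => N * d i)) ∧
    ∀ j, P ∈ II d N (ζ j) (N * t j)

def Good {m : ℕ} (d : Fin n → ℕ) (ζ : Fin (m + 2) → Fin n → K) (t : Fin (m + 2) → ℚ) (Θ : ℕ) (D : Fin n → ℕ)
    (f : Fin (m + 2) → MvPolynomial (Fin n) K) : Prop :=
  ∃ g ∈ UU K D, ∀ j, g - f j ∈ II d Θ (ζ j) (Θ * t j)

/-- interpolation property -/
def INDN {m : ℕ} (d : Fin n → ℕ) (ζ : Fin (m + 2) → Fin n → K) (s : Finset (Fin n)) (t : Fin (m + 2) → ℚ)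
    (N C : ℕ) : Prop :=
  ∀ θ : ℕ, ∀ D : Fin n → ℕ, (∀ i ∉ s, D i = 0) → (∀ i ∈ s, N * θ * ee m d s i + C ≤ D i) →
    ∀ f : Fin (m + 2) → MvPolynomial (Fin n) K, (∀ j, f j ∈ UU K D) → Good d ζ t (N * θ) D f

def IND {m : ℕ} (d : Fin n → ℕ) (ζ : Fin (m + 2) → Fin n → K) (s : Finset (Fin n)) (t : Fin (m + 2) → ℚ) : Prop :=
  ∃ N C : ℕ, 0 < N ∧ INDN d ζ s t N C

theorem INDN_mul {m : ℕ} {d : Fin n → ℕ} {ζ : Fin (m + 2) → Fin n → K} {s : Finset (Fin n)} {t : Fin (m + 2) → ℚ}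
    {N C : ℕ} (h : INDN d ζ s t N C) (a C' : ℕ) (hC : C ≤ C') : INDN d ζ s t (N * a) C' := by
  intro θ D h1 h2 f hf
  have := h (a * θ) D h1 (fun i hi => by
    have := h2 i hi
    rw [← mul_assoc]; omega) f hf
  rwa [← mul_assoc] at this

theorem Good_add {m : ℕ} {d : Fin n → ℕ} {ζ : Fin (m + 2) → Fin n → K} {t : Fin (m + 2) → ℚ} {Θ : ℕ} {D : Fin n → ℕ}
    {f f' : Fin (m + 2) → MvPolynomial (Fin n) K} (h : Good d ζ t Θ D f) (h' : Good d ζ t Θ D f') :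
    Good d ζ t Θ D (fun j => f j + f' j) := by
  obtain ⟨g, hg, h⟩ := h
  obtain ⟨g', hg', h'⟩ := h'
  refine ⟨g + g', add_mem hg hg', fun j => ?_⟩
  have := add_mem (h j) (h' j)
  convert this using 1; ring

theorem Good_diag {m : ℕ} {d : Fin n → ℕ} {ζ : Fin (m + 2) → Fin n → K} {t : Fin (m + 2) → ℚ} {Θ : ℕ} {D : Fin n → ℕ}
    {g : MvPolynomial (Fin n) K} (hg : g ∈ UU K D) : Good d ζ t Θ D (fun _ => g) :=
  ⟨g, hg, fun j => by simp⟩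

theorem Good_congr {m : ℕ} {d : Fin n → ℕ} {ζ : Fin (m + 2) → Fin n → K} {t : Fin (m + 2) → ℚ} {Θ : ℕ} {D : Fin n → ℕ}
    {f f' : Fin (m + 2) → MvPolynomial (Fin n) K} (h : Good d ζ t Θ D f)
    (hff : ∀ j, f j - f' j ∈ II d Θ (ζ j) (Θ * t j)) : Good d ζ t Θ D f' := by
  obtain ⟨g, hg, h⟩ := h
  refine ⟨g, hg, fun j => ?_⟩
  have := add_mem (h j) (hff j)
  convert this using 1; ring

theorem Good_mono {m : ℕ} {d : Fin n → ℕ} {ζ : Fin (m + 2) → Fin n → K} {t : Fin (m + 2) → ℚ} {Θ : ℕ} {D D' : Fin n → ℕ}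
    {f : Fin (m + 2) → MvPolynomial (Fin n) K} (h : Good d ζ t Θ D f) (hD : ∀ i, D i ≤ D' i) :
    Good d ζ t Θ D' f := by
  obtain ⟨g, hg, h⟩ := h
  exact ⟨g, UU_mono hD hg, h⟩

theorem IND_trivial {m : ℕ} {d : Fin n → ℕ} {ζ : Fin (m + 2) → Fin n → K} {s : Finset (Fin n)} {t : Fin (m + 2) → ℚ}
    (j0 : Fin (m + 2)) (h : ∀ j, j ≠ j0 → t j ≤ 0) : IND d ζ s t := by
  refine ⟨1, 0, one_pos, ?_⟩
  intro θ D h1 h2 f hf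
  refine ⟨f j0, hf j0, fun j => ?_⟩
  by_cases hj : j = j0
  · subst hj; simp
  · exact II_of_nonpos (mul_nonpos_of_nonneg_of_nonpos (by positivity) (h j hj)) _

/-- restriction of an admissible polynomial to a hyperplane -/
theorem Hm {m : ℕ} {d : Fin n → ℕ} (hd : ∀ i, 0 < d i) {ζ : Fin (m + 2) → Fin n → K}
    (hsep : ∀ j j', j ≠ j' → ∀ i, ζ j i ≠ ζ j' i) {s : Finset (Fin n)} {t : Fin (m + 2) → ℚ}
    {N : ℕ} {P : MvPolynomial (Fin n) K} (hP : P ≠ 0)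
    (hPU : P ∈ UU K (onS s (fun i => N * d i))) (hPI : ∀ j, P ∈ II d N (ζ j) (N * t j))
    (i : Fin n) (hi : i ∈ s) (j0 : Fin (m + 2)) :
    ∃ k : ℕ, k ≤ N * d i ∧ ∃ Q : MvPolynomial (Fin n) K, Q ≠ 0 ∧
      Q ∈ UU K (onS (s.erase i) (fun i => N * d i)) ∧ Q ∈ II d N (ζ j0) (N * t j0 - (k : ℚ) / d i) ∧
      ∀ j, j ≠ j0 → Q ∈ II d N (ζ j) (N * t j - N + (k : ℚ) / d i) := by
  obtain ⟨k, R, hR, hne⟩ := exists_factor i (ζ j0 i) hP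
  have hR0 : R ≠ 0 := by rintro rfl; simp at hne
  have hXk : (X i - C (ζ j0 i) : MvPolynomial (Fin n) K) ^ k ≠ 0 := pow_ne_zero _ (X_sub_C_ne _ _)
  have hdeg : k + degreeOf i R ≤ N * d i := by
    have h1 := hPU i
    rw [hR, degreeOf_mul_eq hXk hR0, degreeOf_pow_eq _ _ _ (X_sub_C_ne _ _)] at h1
    have h2 : degreeOf i (X i - C (ζ j0 i) : MvPolynomial (Fin n) K) = 1 := by
      apply le_antisymm
      · simpa using UU_X_sub i (ζ j0 i) i
      · rw [Nat.one_le_iff_ne_zero]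
        intro h0
        have h3 : pderiv i (X i - C (ζ j0 i) : MvPolynomial (Fin n) K) = 0 :=
          pderiv_eq_zero_of_UU (D := fun l => degreeOf l (X i - C (ζ j0 i) : MvPolynomial (Fin n) K)) (fun l => le_rfl) i h0
        simp at h3
    rw [h2] at h1
    simp only [onS, hi, if_true] at h1
    linarith
  have hRU : R ∈ UU K (onS s (fun i => N * d i)) := UU_of_mul hXk (hR ▸ hPU)
  refine ⟨k, by omega, sb i (ζ j0 i) R, hne, ?_, ?_, ?_⟩
  · refine UU_mono ?_ (UU_sb i (ζ j0 i) hRU)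
    intro l
    by_cases h : l = i
    · subst h; simp [onS]
    · simp [onS, h]
  · apply sb_II_self i k
    rw [← hR]; exact hPI j0
  · intro j hj
    have h1 : R ∈ II d N (ζ j) (N * t j) :=
      II_cancel_pow i (ζ j0 i) (hsep j0 j (Ne.symm hj) i) k (hR ▸ hPI j)
    have h2 := sb_II h1 i (ζ j0 i) (N * d i - k) (by omega)
    convert h2 using 1
    have : (0 : ℚ) < d i := by exact_mod_cast hd i
    rw [Nat.cast_sub (by omega)]
    push_cast
    field_simp
    ring

theorem Adm_nonpos {m : ℕ} {d : Fin n → ℕ} {ζ : Fin (m + 2) → Fin n → K} {t : Fin (m + 2) → ℚ}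
    (h : Adm d ζ ∅ t) (j : Fin (m + 2)) : t j ≤ 0 := by
  obtain ⟨N, hN, P, hP, hPU, hPI⟩ := h
  have h1 : P = C (coeff 0 P) := by
    ext k
    rw [coeff_C]
    split_ifs with h
    · rw [h]
    · by_contra hk
      have := mem_UU'.1 hPU k hk
      apply h
      ext i
      have := this i
      simp [onS] at this
      simp [this]
  have h2 : coeff 0 (tr (ζ j) P) ≠ 0 := by
    rw [h1, tr_C]
    intro h3
    simp at h3
    rw [h3] at h1
    simp at h1
    exact hP h1
  have := hPI j 0 h2
  rw [phi_zero] at this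
  have hN' : (0 : ℚ) < N := by exact_mod_cast hN
  by_contra hc
  push Not at hc
  have := mul_pos hN' hc
  linarith

theorem pair_lemma {m : ℕ} {d : Fin n → ℕ} (hd : ∀ i, 0 < d i) {ζ : Fin (m + 2) → Fin n → K}
    (hsep : ∀ j j', j ≠ j' → ∀ i, ζ j i ≠ ζ j' i) (s : Finset (Fin n)) :
    ∀ (t : Fin (m + 2) → ℚ), Adm d ζ s t → ∀ j j', j ≠ j' → t j + t j' ≤ s.card := by
  induction s using Finset.induction_on with
  | empty =>
    intro t h j j' _
    have h1 := Adm_nonpos h j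
    have h2 := Adm_nonpos h j'
    simp; linarith
  | insert i s hi ih =>
    rintro t ⟨N, hN, P, hP, hPU, hPI⟩ j j' hj
    obtain ⟨k, hk, Q, hQ, hQU, hQ0, hQj⟩ := Hm hd hsep hP hPU hPI i (by simp) j
    rw [Finset.erase_insert hi] at hQU
    have hN' : (0 : ℚ) < N := by exact_mod_cast hN
    have hdi : (0 : ℚ) < d i := by exact_mod_cast hd i
    have := ih (fun l => if l = j then t j - k / d i / N else t l - 1 + k / d i / N)
      ⟨N, hN, Q, hQ, hQU, ?_⟩ j j' hj
    · simp only [if_true, if_neg hj.symm] at this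
      rw [Finset.card_insert_of_notMem hi]
      push_cast
      linarith
    · intro l
      by_cases hl : l = j
      · subst hl
        simp only [if_true]
        convert hQ0 using 1
        field_simp
      · simp only [if_neg hl]
        convert hQj l hl using 1
        field_simp

theorem Adm_none {m : ℕ} {d : Fin n → ℕ} (hd : ∀ i, 0 < d i) {ζ : Fin (m + 2) → Fin n → K}
    (hsep : ∀ j j', j ≠ j' → ∀ i, ζ j i ≠ ζ j' i) {s : Finset (Fin n)} {t : Fin (m + 2) → ℚ}
    (h : Adm d ζ s t) (i : Fin n) (hi : i ∈ s) : Adm d ζ (s.erase i) (fun j => t j - 1) := by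
  obtain ⟨N, hN, P, hP, hPU, hPI⟩ := h
  obtain ⟨k, hk, Q, hQ, hQU, hQ0, hQj⟩ := Hm hd hsep hP hPU hPI i hi 0
  have hdi : (0 : ℚ) < d i := by exact_mod_cast hd i
  have hk' : (k : ℚ) / d i ≤ N := by
    rw [div_le_iff₀ hdi]; exact_mod_cast hk
  have hk0 : (0 : ℚ) ≤ (k : ℚ) / d i := by positivity
  refine ⟨N, hN, Q, hQ, hQU, fun j => ?_⟩
  by_cases hj : j = 0
  · subst hj
    exact II_anti (by linarith) hQ0
  · exact II_anti (by linarith) (hQj j hj)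

theorem prod_II {d : Fin n → ℕ} (hd : ∀ i, 0 < d i) (z : Fin n → K) (s : Finset (Fin n)) (b : ℕ) :
    ∏ l ∈ s, (X l - C (z l) : MvPolynomial (Fin n) K) ^ (b * d l) ∈ II d b z (b * s.card) := by
  classical
  induction s using Finset.induction_on with
  | empty => exact II_of_nonpos (by simp) _
  | insert i s hi ih =>
    rw [Finset.prod_insert hi, Finset.card_insert_of_notMem hi]
    have := II_pow_mul ih i ?_ (hd i)
    · convert this using 1
      push_cast; ring
    · have h := UU_prod s (fun l => (b * d l) • Pi.single l 1) (fun l => (X l - C (z l) : MvPolynomial (Fin n) K) ^ (b * d l))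
        (fun l _ => UU_pow (UU_X_sub l (z l)) _) i
      rw [Finset.sum_apply, Finset.sum_eq_zero] at h
      · omega
      · intro l hl
        have : l ≠ i := by rintro rfl; exact hi hl
        simp [Pi.single_eq_of_ne this.symm]

theorem trade {m : ℕ} {d : Fin n → ℕ} (hd : ∀ i, 0 < d i) {ζ : Fin (m + 2) → Fin n → K}
    (hsep : ∀ j j', j ≠ j' → ∀ i, ζ j i ≠ ζ j' i) {s : Finset (Fin n)} {t : Fin (m + 2) → ℚ}
    (h : Adm d ζ s t) (i : Fin n) (hi : i ∈ s) (j0 : Fin (m + 2)) :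
    (∀ j, j ≠ j0 → t j - 1 ≤ 0) ∨ Adm d ζ (s.erase i) (fun j => if j = j0 then t j else t j - 1) := by
  classical
  by_cases hT : ∀ j, j ≠ j0 → t j - 1 ≤ 0
  · exact Or.inl hT
  right
  have hpair := fun j j' => pair_lemma hd hsep s t h j j'
  obtain ⟨N, hN, P, hP, hPU, hPI⟩ := h
  obtain ⟨k, hk, Q, hQ, hQU, hQ0, hQj⟩ := Hm hd hsep hP hPU hPI i hi j0
  have hdi : (0 : ℚ) < d i := by exact_mod_cast hd i
  push Not at hT
  obtain ⟨j1, hj1, hpos⟩ := hT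
  obtain ⟨j2, hj2, hmax⟩ := Finset.exists_max_image (Finset.univ.erase j0) (fun j => t j - 1) ⟨j1, by simp [hj1]⟩
  have hj2' : j2 ≠ j0 := (Finset.mem_erase.1 hj2).1
  set T := t j2 - 1 with hTdef
  have hTpos : 0 < T := hpos.trans_le (hmax j1 (by simp [hj1]))
  -- numerators
  let a : ℕ := T.num.toNat * d i
  let b : ℕ := k * T.den
  have hnum : 0 < T.num := Rat.num_pos.2 hTpos
  have hTeq : (T.num.toNat : ℚ) = T * T.den := by
    have h1 : ((T.num.toNat : ℤ) : ℚ) = (T.num : ℚ) := by rw [Int.toNat_of_nonneg hnum.le]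
    rw [Rat.mul_den_eq_num, ← h1]; exact (Int.cast_natCast _).symm
  have hab : (a : ℚ) * (k / d i) = b * T := by
    simp only [a, b]
    push_cast
    rw [hTeq]
    field_simp
  have ha : 0 < a := Nat.mul_pos (by omega) (hd i)
  have hcard : ((s.erase i).card : ℚ) = s.card - 1 := by
    rw [Finset.card_erase_of_mem hi, Nat.cast_sub (Finset.card_pos.2 ⟨i, hi⟩)]; simp
  refine ⟨a * N + b, by positivity, Q ^ a * ∏ l ∈ s.erase i, (X l - C (ζ j0 l)) ^ (b * d l), ?_, ?_, ?_⟩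
  · refine mul_ne_zero (pow_ne_zero _ hQ) (Finset.prod_ne_zero_iff.2 fun l _ => pow_ne_zero _ (X_sub_C_ne _ _))
  · refine UU_mono ?_ (UU_mul (UU_pow hQU a) (UU_prod (s.erase i) (fun l => (b * d l) • Pi.single l 1) _
        (fun l _ => UU_pow (UU_X_sub l (ζ j0 l)) _)))
    intro l
    simp only [Pi.add_apply, Pi.smul_apply, Finset.sum_apply, smul_eq_mul]
    by_cases hl : l ∈ s.erase i
    · rw [Finset.sum_eq_single l]
      · simp only [onS, hl, if_true, Pi.single_eq_same]
        apply le_of_eq; ring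
      · intro x _ hx
        simp [Pi.single_eq_of_ne hx.symm]
      · intro h; exact absurd hl h
    · rw [Finset.sum_eq_zero]
      · simp only [onS, hl, if_false]; simp
      · intro x hx
        have : x ≠ l := by rintro rfl; exact hl hx
        simp [Pi.single_eq_of_ne this.symm]
  · intro j
    by_cases hj : j = j0
    · subst hj
      simp only [if_true]
      refine II_anti ?_ (II_mul (II_pow hQ0 a) (prod_II hd (ζ j) (s.erase i) b))
      rw [hcard]
      have h1 := hpair j2 j hj2'
      have hb : (0 : ℚ) ≤ b := by positivity
      push_cast
      have h2 : (b : ℚ) * T ≤ b * ((s.card : ℚ) - 1 - t j) := by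
        apply mul_le_mul_of_nonneg_left _ hb
        linarith
      nlinarith
    · simp only [if_neg hj]
      refine II_anti ?_ (II_mul (II_pow (hQj j hj) a) (II_of_nonpos (c := 0) (θ := b) le_rfl _))
      have h1 := hmax j (by simp [hj])
      have hb : (0 : ℚ) ≤ b := by positivity
      have h2 := mul_le_mul_of_nonneg_left h1 hb
      push_cast
      nlinarith
end
end Dys
set_option linter.unusedSimpArgs false
namespace Dys
open MvPolynomial
section
variable {K : Type*} [Field K] {n : ℕ}

def tt {m : ℕ} (t : Fin (m + 2) → ℚ) : Option (Fin (m + 2)) → Fin (m + 2) → ℚ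
  | none => fun j => t j - 1
  | some j0 => fun j => if j = j0 then t j else t j - 1

theorem fix_of_UU (φ : MvPolynomial (Fin n) K →ₐ[K] MvPolynomial (Fin n) K) {D : Fin n → ℕ}
    (hφ : ∀ i, D i ≠ 0 → φ (X i) = X i) {x : MvPolynomial (Fin n) K} (hx : x ∈ UU K D) : φ x = x := by
  conv_rhs => rw [x.as_sum]
  conv_lhs => rw [x.as_sum]
  rw [map_sum]
  refine Finset.sum_congr rfl fun k hk => ?_
  rw [monomial_eq, map_mul, Finsupp.prod_fintype _ _ (by simp), map_prod]
  congr 1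
  · rw [← algebraMap_eq]; exact φ.commutes _
  · refine Finset.prod_congr rfl fun l _ => ?_
    by_cases h : D l = 0
    · have := mem_UU'.1 hx k (mem_support_iff.1 hk) l
      have : k l = 0 := by omega
      simp [this]
    · rw [map_pow, hφ l h]

theorem sb_fix {D : Fin n → ℕ} {x : MvPolynomial (Fin n) K} (hx : x ∈ UU K D) (i : Fin n) (hi : D i = 0)
    (c : K) : sb i c x = x :=
  fix_of_UU _ (fun l hl => sb_X_ne _ _ (by rintro rfl; exact hl hi) _) hx

theorem peel_c {m : ℕ} {d : Fin n → ℕ} (hd : ∀ i, 0 < d i) {ζ : Fin (m + 2) → Fin n → K}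
    (hsep : ∀ j j', j ≠ j' → ∀ i, ζ j i ≠ ζ j' i) {t : Fin (m + 2) → ℚ}
    {Θ : ℕ} {D D₀ : Fin n → ℕ} (i : Fin n) (hDi : Θ * d i ≤ D₀ i)
    (hH : ∀ o, ∀ f : Fin (m + 2) → MvPolynomial (Fin n) K, (∀ j, f j ∈ UU K (Function.update D₀ i 0)) →
      Good d ζ (tt t o) Θ (Function.update D₀ i 0) f)
    (c : K) (q : MvPolynomial (Fin n) K) (hq : ∀ f ∈ UU K D₀, q * f ∈ UU K D)
    (hG : ∀ f : Fin (m + 2) → MvPolynomial (Fin n) K, (∀ j, f j ∈ UU K D₀) →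
      Good d ζ t Θ D (fun j => (X i - C c) * q * f j)) :
    ∀ f : Fin (m + 2) → MvPolynomial (Fin n) K, (∀ j, f j ∈ UU K D₀) →
      Good d ζ t Θ D (fun j => q * f j) := by
  intro f hf
  have hup : ∀ l, Function.update D₀ i 0 l ≤ D₀ l := by
    intro l; by_cases h : l = i
    · subst h; simp
    · simp [h]
  obtain ⟨o, ho⟩ : ∃ o, ∀ j, tt t o j = t j ∨ (tt t o j = t j - 1 ∧ c ≠ ζ j i) := by
    by_cases h : ∃ j0, c = ζ j0 i
    · obtain ⟨j0, rfl⟩ := h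
      refine ⟨some j0, fun j => ?_⟩
      by_cases hj : j = j0
      · left; simp [tt, hj]
      · right; exact ⟨by simp [tt, hj], hsep j0 j (Ne.symm hj) i⟩
    · push Not at h
      exact ⟨none, fun j => Or.inr ⟨rfl, h j⟩⟩
  obtain ⟨g, hg, hgj⟩ := hH o (fun j => sb i c (f j)) (fun j => UU_sb i c (hf j))
  have key : ∀ j, ∃ r ∈ UU K D₀, ∃ ι ∈ II d Θ (ζ j) (Θ * t j), f j = g + (X i - C c) * r + ι := by
    intro j
    obtain ⟨r0, hr0⟩ := dvd_sub_sb i c (f j)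
    have hr0U : r0 ∈ UU K D₀ := by
      refine UU_of_mul (X_sub_C_ne i c) ?_
      rw [← hr0]
      exact sub_mem (hf j) (UU_mono hup (UU_sb i c (hf j)))
    set b := sb i c (f j) - g with hb
    have hbU : b ∈ UU K (Function.update D₀ i 0) := sub_mem (UU_sb i c (hf j)) hg
    have hbI : b ∈ II d Θ (ζ j) (Θ * tt t o j) := by
      have := neg_mem (hgj j)
      rwa [neg_sub] at this
    rcases ho j with h | ⟨h, hcj⟩
    · refine ⟨r0, hr0U, b, by rwa [h] at hbI, ?_⟩
      rw [← hr0, hb]; ring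
    · set u := c - ζ j i with hu
      have hu0 : u ≠ 0 := sub_ne_zero.2 hcj
      set p := Θ * d i with hp
      set B : MvPolynomial (Fin n) K := C ((u ^ p)⁻¹) * ((X i - C (ζ j i)) ^ p * b) with hB
      have hBI : B ∈ II d Θ (ζ j) (Θ * t j) := by
        refine Ideal.mul_mem_left _ _ ?_
        have := II_pow_mul hbI i (by have := hbU i; simpa using this) (hd i)
        convert this using 1
        rw [h]; ring
      have hBU : B ∈ UU K D₀ := by
        rw [hB, ← smul_eq_C_mul]
        refine Submodule.smul_mem _ _ (UU_mono ?_ (UU_mul (UU_pow (UU_X_sub i (ζ j i)) p) hbU))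
        intro l; by_cases hl : l = i
        · subst hl; simpa using hDi
        · simp [hl]
      have hdvd : (X i - C c) ∣ b - B := by
        rw [dvd_iff_sb, map_sub, hB, map_mul, map_mul, sb_fix hbU i (by simp)]
        have : sb i c ((X i - C (ζ j i)) ^ p) = C (u ^ p) := by simp [hu]
        rw [this, sb_C, ← mul_assoc, ← C_mul, inv_mul_cancel₀ (pow_ne_zero _ hu0)]
        simp
      obtain ⟨r1, hr1⟩ := hdvd
      have hr1U : r1 ∈ UU K D₀ := by
        refine UU_of_mul (X_sub_C_ne i c) ?_
        rw [← hr1]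
        exact sub_mem (UU_mono hup hbU) hBU
      refine ⟨r0 + r1, add_mem hr0U hr1U, B, hBI, ?_⟩
      rw [mul_add, ← hr0, ← hr1, hb]; ring
  choose r hr ι hι hfj using key
  refine Good_congr (Good_add (Good_diag (hq g (UU_mono hup hg))) (hG r hr)) fun j => ?_
  have : q * g + (X i - C c) * q * r j - q * f j = (-q) * ι j := by
    rw [hfj j]; ring
  change q * g + (X i - C c) * q * r j - q * f j ∈ _
  rw [this]
  exact Ideal.mul_mem_left _ _ (hι j)

theorem top_split {D₀ : Fin n → ℕ} (i : Fin n) {f : MvPolynomial (Fin n) K}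
    (hf : f ∈ UU K (D₀ + Pi.single i 1)) :
    ∃ top ∈ UU K (Function.update D₀ i 0), f - X i ^ (D₀ i + 1) * top ∈ UU K D₀ := by
  classical
  let S : Submodule K (MvPolynomial (Fin n) K) :=
    UU K D₀ ⊔ (UU K (Function.update D₀ i 0)).map (LinearMap.mulLeft K (X i ^ (D₀ i + 1)))
  have hS : f ∈ S := by
    rw [f.as_sum]
    refine sum_mem fun k hk => ?_
    have hk' := mem_UU'.1 hf k (mem_support_iff.1 hk)
    by_cases h : k i = D₀ i + 1
    · refine Submodule.mem_sup_right ⟨monomial (k.erase i) (coeff k f), ?_, ?_⟩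
      · rw [SetLike.mem_coe, mem_UU']
        intro l hl
        rw [coeff_monomial] at hl
        split_ifs at hl with h1
        · subst h1
          intro x
          by_cases hx : x = i
          · subst hx; simp
          · have := hk' x
            simpa [hx, Finsupp.erase_ne hx] using this
        · simp at hl
      · rw [LinearMap.mulLeft_apply, X_pow_eq_monomial, monomial_mul, one_mul, ← h, add_comm,
          erase_add_single']
    · refine Submodule.mem_sup_left ?_
      rw [mem_UU']
      intro l hl
      rw [coeff_monomial] at hl
      split_ifs at hl with h1
      · subst h1
        intro x
        have := hk' x
        by_cases hx : x = i
        · subst hx; simp at this; omega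
        · simpa [hx] using this
      · simp at hl
  obtain ⟨a, ha, b, ⟨top, htop, rfl⟩, hab⟩ := Submodule.mem_sup.1 hS
  refine ⟨top, htop, ?_⟩
  rw [← hab]
  simpa using ha

theorem peel_inf {m : ℕ} {d : Fin n → ℕ} (hd : ∀ i, 0 < d i) {ζ : Fin (m + 2) → Fin n → K}
    {t : Fin (m + 2) → ℚ}
    {Θ : ℕ} {D D₀ : Fin n → ℕ} (i : Fin n) (hDi : Θ * d i ≤ D₀ i)
    (hH : ∀ o, ∀ f : Fin (m + 2) → MvPolynomial (Fin n) K, (∀ j, f j ∈ UU K (Function.update D₀ i 0)) →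
      Good d ζ (tt t o) Θ (Function.update D₀ i 0) f)
    (hD : ∀ l, (D₀ + Pi.single i 1 : Fin n → ℕ) l ≤ D l)
    (hG : ∀ f : Fin (m + 2) → MvPolynomial (Fin n) K, (∀ j, f j ∈ UU K D₀) →
      Good d ζ t Θ D f) :
    ∀ f : Fin (m + 2) → MvPolynomial (Fin n) K, (∀ j, f j ∈ UU K (D₀ + Pi.single i 1)) →
      Good d ζ t Θ D f := by
  intro f hf
  choose top htop hlow using fun j => top_split i (hf j)
  obtain ⟨g, hg, hgj⟩ := hH none top htop
  set E := D₀ i + 1 with hE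
  set p := Θ * d i with hp
  have key : ∀ j, ∃ r ∈ UU K D₀, ∃ ι ∈ II d Θ (ζ j) (Θ * t j), f j = X i ^ E * g + r + ι := by
    intro j
    set b := top j - g with hb
    have hbU : b ∈ UU K (Function.update D₀ i 0) := sub_mem (htop j) hg
    have hbI : b ∈ II d Θ (ζ j) (Θ * (t j - 1)) := by
      have := neg_mem (hgj j)
      rwa [neg_sub] at this
    have hI : X i ^ (E - p) * ((X i - C (ζ j i)) ^ p * b) ∈ II d Θ (ζ j) (Θ * t j) := by
      refine Ideal.mul_mem_left _ _ ?_
      have := II_pow_mul hbI i (by have := hbU i; simpa using this) (hd i)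
      convert this using 1
      ring
    have hmon : X i ^ E - X i ^ (E - p) * (X i - C (ζ j i)) ^ p ∈ UU K (Pi.single i (D₀ i) : Fin n → ℕ) := by
      rcases Nat.eq_zero_or_pos p with h0 | h0
      · rw [h0]; simp
      · obtain ⟨p', hp'⟩ : ∃ p', p = p' + 1 := ⟨p - 1, by omega⟩
        obtain ⟨B, hB, h⟩ := AA_aux i p' (fun _ => ζ j i)
        rw [Finset.prod_const, Finset.card_univ, Fintype.card_fin, ← hp'] at h
        have : X i ^ E - X i ^ (E - p) * (X i - C (ζ j i)) ^ p = - (X i ^ (E - p) * B) := by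
          rw [h, mul_add, ← pow_add, Nat.sub_add_cancel (by omega)]; ring
        rw [this]
        refine neg_mem (UU_mono ?_ (UU_mul (UU_pow (UU_X i) _) hB))
        intro l; by_cases hl : l = i
        · subst hl; simp; omega
        · simp [hl]
    refine ⟨(f j - X i ^ E * top j) + (X i ^ E - X i ^ (E - p) * (X i - C (ζ j i)) ^ p) * b, ?_, _, hI, ?_⟩
    · refine add_mem (hlow j) (UU_mono ?_ (UU_mul hmon hbU))
      intro l; by_cases hl : l = i
      · subst hl; simp
      · simp [hl]
    · rw [hb]; ring
  choose r hr ι hι hfj using key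
  have hgU : X i ^ E * g ∈ UU K D := by
    refine UU_mono ?_ (UU_mul (UU_pow (UU_X i) E) hg)
    intro l
    have := hD l
    by_cases hl : l = i
    · subst hl; simp at this ⊢; omega
    · simp [hl] at this ⊢; omega
  refine Good_congr (Good_add (Good_diag hgU) (hG r hr)) fun j => ?_
  have : X i ^ E * g + r j - f j = - ι j := by
    rw [hfj j]; ring
  change X i ^ E * g + r j - f j ∈ _
  rw [this]
  exact neg_mem (hι j)

/-- raise and peel: the whole induction step once `h * f` is good. -/
theorem peel_all {m : ℕ} {d : Fin n → ℕ} (hd : ∀ i, 0 < d i) {ζ : Fin (m + 2) → Fin n → K}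
    (hsep : ∀ j j', j ≠ j' → ∀ i, ζ j i ≠ ζ j' i) {t : Fin (m + 2) → ℚ} {s : Finset (Fin n)}
    {Θ : ℕ} (L : Fin n → ℕ) (hL : ∀ i ∈ s, Θ * d i ≤ L i)
    (hH : ∀ i ∈ s, ∀ o, ∀ D' : Fin n → ℕ, (∀ l, l ∉ s.erase i → D' l = 0) → (∀ l ∈ s.erase i, L l ≤ D' l) →
      ∀ f : Fin (m + 2) → MvPolynomial (Fin n) K, (∀ j, f j ∈ UU K D') → Good d ζ (tt t o) Θ D' f)
    {D D₀ : Fin n → ℕ} (hD0 : ∀ i ∉ s, D i = 0) (hDD : ∀ i, D₀ i ≤ D i) (hDL : ∀ i ∈ s, L i ≤ D₀ i)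
    (h : MvPolynomial (Fin n) K) (hh : h ∈ Submonoid.closure (linSet K s))
    (hhU : ∀ f ∈ UU K D₀, h * f ∈ UU K D)
    (hG : ∀ f : Fin (m + 2) → MvPolynomial (Fin n) K, (∀ j, f j ∈ UU K D₀) →
      Good d ζ t Θ D (fun j => h * f j)) :
    ∀ f : Fin (m + 2) → MvPolynomial (Fin n) K, (∀ j, f j ∈ UU K D) → Good d ζ t Θ D f := by
  have hH' : ∀ D₁ : Fin n → ℕ, (∀ i ∉ s, D₁ i = 0) → (∀ i ∈ s, L i ≤ D₁ i) → ∀ i ∈ s, ∀ o,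
      ∀ f : Fin (m + 2) → MvPolynomial (Fin n) K, (∀ j, f j ∈ UU K (Function.update D₁ i 0)) →
      Good d ζ (tt t o) Θ (Function.update D₁ i 0) f := by
    intro D₁ g1 g2 i hi o f hf
    refine hH i hi o _ ?_ ?_ f hf
    · intro l hl
      by_cases h : l = i
      · subst h; simp
      · simp [h]; exact g1 l (by simpa [h] using hl)
    · intro l hl
      simp [Finset.ne_of_mem_erase hl]
      exact g2 l (Finset.mem_of_mem_erase hl)
  have hD00 : ∀ i ∉ s, D₀ i = 0 := fun i hi => by have := hDD i; rw [hD0 i hi] at this; omega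
  -- peel all factors
  have step1 : h ≠ 0 ∧ ∀ q : MvPolynomial (Fin n) K, (∀ f ∈ UU K D₀, h * q * f ∈ UU K D) →
      (∀ f : Fin (m + 2) → MvPolynomial (Fin n) K, (∀ j, f j ∈ UU K D₀) →
        Good d ζ t Θ D (fun j => h * q * f j)) →
      (∀ f : Fin (m + 2) → MvPolynomial (Fin n) K, (∀ j, f j ∈ UU K D₀) →
        Good d ζ t Θ D (fun j => q * f j)) := by
    clear hhU hG
    induction hh using Submonoid.closure_induction with
    | mem x hx =>
      obtain ⟨i, hi, c, rfl⟩ := hx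
      refine ⟨X_sub_C_ne i c, fun q hq hG => ?_⟩
      refine peel_c hd hsep i ((hL i hi).trans (hDL i hi)) (hH' D₀ hD00 hDL i hi) c q ?_ hG
      intro f hf
      have := hq f hf
      rw [mul_assoc] at this
      exact UU_of_mul (X_sub_C_ne i c) this
    | one => exact ⟨one_ne_zero, fun q _ hG => by simpa using hG⟩
    | mul x y _ _ hx hy =>
      refine ⟨mul_ne_zero hx.1 hy.1, fun q hq hG => ?_⟩
      have h1 := hx.2 (y * q) (fun f hf => by simpa [mul_assoc] using hq f hf)
        (fun f hf => by simpa [mul_assoc] using hG f hf)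
      refine hy.2 q (fun f hf => ?_) h1
      have := hq f hf
      rw [mul_assoc x, mul_assoc x] at this
      exact UU_of_mul hx.1 this
  have step2 : ∀ f : Fin (m + 2) → MvPolynomial (Fin n) K, (∀ j, f j ∈ UU K D₀) → Good d ζ t Θ D f := by
    have := step1.2 1 (by simpa using hhU) (by simpa using hG)
    simpa using this
  have step3 : ∀ (k : ℕ) (D₁ : Fin n → ℕ), (∀ i, D₀ i ≤ D₁ i) → (∀ i, D₁ i ≤ D i) →
      ∑ i, D₁ i = ∑ i, D₀ i + k →
      ∀ f : Fin (m + 2) → MvPolynomial (Fin n) K, (∀ j, f j ∈ UU K D₁) → Good d ζ t Θ D f := by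
    intro k
    induction k with
    | zero =>
      intro D₁ h1 h2 h3 f hf
      have : D₁ = D₀ := by
        have := (Finset.sum_eq_sum_iff_of_le (s := Finset.univ) (fun i _ => h1 i)).1 (by simpa using h3.symm)
        ext i; exact (this i (Finset.mem_univ i)).symm
      rw [this] at hf
      exact step2 f hf
    | succ k ih =>
      intro D₁ h1 h2 h3
      obtain ⟨i, hi⟩ : ∃ i, D₀ i < D₁ i := by
        by_contra hc
        push Not at hc
        have := Finset.sum_le_sum (s := Finset.univ) (fun i _ => hc i)
        omega
      have his : i ∈ s := by
        by_contra hc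
        have := h2 i
        rw [hD0 i hc] at this; omega
      set D₂ := Function.update D₁ i (D₁ i - 1) with hD₂
      have e : D₁ = D₂ + Pi.single i 1 := by
        ext l; by_cases hl : l = i
        · subst hl; simp [hD₂]; omega
        · simp [hD₂, hl]
      have h1' : ∀ l, D₀ l ≤ D₂ l := by
        intro l; by_cases hl : l = i
        · subst hl; simp [hD₂]; omega
        · simp [hD₂, hl]; exact h1 l
      have h2' : ∀ l, D₂ l ≤ D₁ l := by
        intro l; rw [e]; simp
      have h3' : ∑ l, D₂ l = ∑ l, D₀ l + k := by
        rw [e] at h3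
        simp only [Pi.add_apply, Finset.sum_add_distrib, Finset.sum_pi_single', Finset.mem_univ, if_true] at h3
        omega
      have hG2 := ih D₂ h1' (fun l => (h2' l).trans (h2 l)) h3'
      rw [e]
      have hL2 : ∀ l ∈ s, L l ≤ D₂ l := fun l hl => (hDL l hl).trans (h1' l)
      refine peel_inf hd i ((hL i his).trans (hL2 i his)) (hH' D₂ ?_ hL2 i his) (fun l => e ▸ h2 l) hG2
      intro l hl
      have := (h2' l).trans (h2 l)
      rw [hD0 l hl] at this; omega
  have hsum : ∑ i, D₀ i ≤ ∑ i, D i := Finset.sum_le_sum fun i _ => hDD i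
  exact step3 (∑ i, D i - ∑ i, D₀ i) D hDD (fun _ => le_rfl) (by omega)

end
end Dys
set_option linter.unusedSimpArgs false
namespace Dys
open MvPolynomial
section
variable {K : Type*} [Field K] {n : ℕ}

noncomputable def pis (K : Type*) [Field K] {n : ℕ} (s : Finset (Fin n)) :
    MvPolynomial (Fin n) K →ₐ[K] MvPolynomial (Fin n) K :=
  bind₁ (fun i => if i ∈ s then X i else 0)

theorem pis_fix {s : Finset (Fin n)} {D : Fin n → ℕ} (hD : ∀ i ∉ s, D i = 0) {x : MvPolynomial (Fin n) K}
    (hx : x ∈ UU K D) : pis K s x = x := by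
  refine fix_of_UU _ (fun i hi => ?_) hx
  have : i ∈ s := by by_contra h; exact hi (hD i h)
  simp [pis, this]

theorem pis_UU (s : Finset (Fin n)) (a : MvPolynomial (Fin n) K) :
    ∃ B : ℕ, pis K s a ∈ UU K (onS s (fun _ => B)) := by
  refine ⟨∑ i, degreeOf i a, ?_⟩
  have := UU_map (pis K s) (fun i => if i ∈ s then 1 else 0) (D := fun i => degreeOf i a) (f := a) ?_ (fun i => le_rfl)
  · refine UU_mono ?_ this
    intro i
    by_cases h : i ∈ s
    · simp only [onS, h, if_true, one_mul]
      exact Finset.single_le_sum (f := fun i => degreeOf i a) (fun _ _ => Nat.zero_le _) (Finset.mem_univ i)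
    · simp [onS, h]
  · intro l
    by_cases h : l ∈ s
    · simpa [pis, h] using UU_X l
    · simp [pis, h]

theorem pis_closure {s : Finset (Fin n)} {h : MvPolynomial (Fin n) K}
    (hh : h ∈ Submonoid.closure (linSet K s)) : pis K s h = h := by
  induction hh using Submonoid.closure_induction with
  | mem x hx =>
    obtain ⟨i, hi, c, rfl⟩ := hx
    simp only [pis, map_sub, bind₁_X_right, hi, if_true, bind₁_C_right]
  | one => simp
  | mul x y _ _ hx hy => rw [map_mul, hx, hy]

theorem span_good {m : ℕ} {d : Fin n → ℕ} {ζ : Fin (m + 2) → Fin n → K} {t : Fin (m + 2) → ℚ}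
    {s : Finset (Fin n)} {N : ℕ} {W : Set (MvPolynomial (Fin n) K)}
    (hW : ∀ w ∈ W, w ∈ UU K (onS s (fun i => N * ee m d s i)) ∧ ∀ j, w ∈ II d N (ζ j) (N * t j))
    {x : MvPolynomial (Fin n) K} (hx : x ∈ Ideal.span W) :
    ∃ B : ℕ, ∀ (θ : ℕ) (D : Fin n → ℕ), (∀ i ∉ s, D i = 0) →
      (∀ D' : Fin n → ℕ, (∀ i ∉ s, D' i = 0) → (∀ i ∈ s, D' i + N * ee m d s i = D i) →
        ∀ f : Fin (m + 2) → MvPolynomial (Fin n) K, (∀ j, f j ∈ UU K D') → Good d ζ t (N * θ) D' f) →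
      ∀ D₀ : Fin n → ℕ, (∀ i ∉ s, D₀ i = 0) → (∀ i ∈ s, D₀ i + B ≤ D i) →
        ∀ f : Fin (m + 2) → MvPolynomial (Fin n) K, (∀ j, f j ∈ UU K D₀) →
          Good d ζ t (N * (θ + 1)) D (fun j => pis K s x * f j) := by
  induction hx using Submodule.span_induction with
  | zero =>
    refine ⟨0, fun θ D _ _ D₀ _ _ f hf => ?_⟩
    simpa using Good_diag (zero_mem (UU K D))
  | add x y _ _ hx hy =>
    obtain ⟨B, hB⟩ := hx
    obtain ⟨B', hB'⟩ := hy
    refine ⟨B + B', fun θ D h1 h2 D₀ h3 h4 f hf => ?_⟩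
    have e1 := hB θ D h1 h2 D₀ h3 (fun i hi => by have := h4 i hi; omega) f hf
    have e2 := hB' θ D h1 h2 D₀ h3 (fun i hi => by have := h4 i hi; omega) f hf
    have := Good_add e1 e2
    simpa [add_mul] using this
  | smul a x _ hx =>
    obtain ⟨B, hB⟩ := hx
    obtain ⟨B', hB'⟩ := pis_UU s a
    refine ⟨B + B', fun θ D h1 h2 D₀ h3 h4 f hf => ?_⟩
    have := hB θ D h1 h2 (D₀ + onS s (fun _ => B')) (fun i hi => by simp [onS, hi, h3 i hi])
      (fun i hi => by have := h4 i hi; simp [onS, hi]; omega) (fun j => pis K s a * f j)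
      (fun j => by rw [mul_comm]; exact UU_mul (hf j) hB')
    convert this using 2 with j
    rw [smul_eq_mul, map_mul]; ring
  | mem w hw =>
    obtain ⟨hwU, hwI⟩ := hW w hw
    refine ⟨∑ i, N * ee m d s i, fun θ D h1 h2 D₀ h3 h4 f hf => ?_⟩
    have hle : ∀ i, N * ee m d s i ≤ ∑ i, N * ee m d s i := fun i =>
      Finset.single_le_sum (f := fun i => N * ee m d s i) (fun _ _ => Nat.zero_le _) (Finset.mem_univ i)
    rw [pis_fix (D := onS s (fun i => N * ee m d s i)) (fun i hi => by simp [onS, hi]) hwU]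
    obtain ⟨g, hg, hgj⟩ := h2 (fun i => D i - N * ee m d s i) (fun i hi => by simp [h1 i hi])
      (fun i hi => by have := h4 i hi; have := hle i; omega) f
      (fun j => UU_mono (fun i => by
        by_cases hi : i ∈ s
        · have := h4 i hi; have := hle i; omega
        · rw [h3 i hi]; exact Nat.zero_le _) (hf j))
    refine ⟨w * g, UU_mono (fun i => ?_) (UU_mul hwU hg), fun j => ?_⟩
    · by_cases hi : i ∈ s
      · have := h4 i hi; have := hle i; simp only [onS, hi, if_true, Pi.add_apply]; omega
      · simp [onS, hi, h1 i hi]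
    · rw [← mul_sub]
      have := II_mul (hwI j) (hgj j)
      have e : N * (θ + 1) = N + N * θ := by ring
      rw [e]
      convert this using 1
      congr 1
      push_cast; ring

theorem ee_mono {m : ℕ} {d : Fin n → ℕ} {s s' : Finset (Fin n)} (h : s ⊆ s') (i : Fin n) :
    ee m d s i ≤ ee m d s' i := by
  unfold ee
  have : ∑ l ∈ s.filter (fun l => i < l), d l ≤ ∑ l ∈ s'.filter (fun l => i < l), d l :=
    Finset.sum_le_sum_of_subset (Finset.filter_subset_filter _ h)
  have := Nat.mul_le_mul_left m this
  omega

theorem main_ind [CharZero K] [IsAlgClosed K] {m : ℕ} {d : Fin n → ℕ} (hd : ∀ i, 0 < d i)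
    {ζ : Fin (m + 2) → Fin n → K}
    (hsep : ∀ j j', j ≠ j' → ∀ i, ζ j i ≠ ζ j' i) (s : Finset (Fin n)) :
    ∀ t : Fin (m + 2) → ℚ, Adm d ζ s t → IND d ζ s t := by
  classical
  induction s using Finset.strongInduction with
  | H s IH =>
  intro t hA
  have hI : ∀ (i : {i // i ∈ s}) (o : Option (Fin (m + 2))), IND d ζ (s.erase i) (tt t o) := by
    rintro ⟨i, hi⟩ o
    cases o with
    | none => exact IH _ (Finset.erase_ssubset hi) _ (Adm_none hd hsep hA i hi)
    | some j0 =>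
      rcases trade hd hsep hA i hi j0 with h | h
      · refine IND_trivial j0 fun j hj => ?_
        simp only [tt, if_neg hj]; exact h j hj
      · exact IH _ (Finset.erase_ssubset hi) _ h
  choose Nf Cf hNf hIND using hI
  obtain ⟨N0, hN0, P0, hP0, hP0U, hP0I⟩ := hA
  set NH := ∏ x : {i // i ∈ s} × Option (Fin (m + 2)), Nf x.1 x.2 with hNH
  set CH := ∑ x : {i // i ∈ s} × Option (Fin (m + 2)), Cf x.1 x.2 with hCH
  have hNHpos : 0 < NH := Finset.prod_pos fun x _ => hNf _ _
  set N := NH * N0 with hN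
  have hNpos : 0 < N := Nat.mul_pos hNHpos hN0
  have hIND' : ∀ i (hi : i ∈ s) o, INDN d ζ (s.erase i) (tt t o) N CH := by
    intro i hi o
    obtain ⟨a, ha⟩ : Nf ⟨i, hi⟩ o ∣ N :=
      (Finset.dvd_prod_of_mem (fun x : {i // i ∈ s} × Option (Fin (m + 2)) => Nf x.1 x.2)
        (Finset.mem_univ (⟨i, hi⟩, o))).trans (dvd_mul_right _ _)
    have hC : Cf ⟨i, hi⟩ o ≤ CH :=
      Finset.single_le_sum (f := fun x : {i // i ∈ s} × Option (Fin (m + 2)) => Cf x.1 x.2)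
        (fun _ _ => Nat.zero_le _) (Finset.mem_univ (⟨i, hi⟩, o))
    rw [ha]
    exact INDN_mul (hIND ⟨i, hi⟩ o) a CH hC
  set E := onS s (fun i => N * d i) with hE
  set J : Ideal (MvPolynomial (Fin n) K) := ⨅ j, II d N (ζ j) (N * t j) with hJ
  have hmemJ : ∀ f, f ∈ J ↔ ∀ j, f ∈ II d N (ζ j) (N * t j) := fun f => by rw [hJ, Ideal.mem_iInf]
  obtain ⟨h, hh, hspan⟩ := base_locus ζ J (fun f hf i => by
      rw [hmemJ] at hf ⊢
      intro j
      have : AA ζ i * pderiv i f = (∏ l ∈ Finset.univ.erase j, (X i - C (ζ l i))) * ((X i - C (ζ j i)) * pderiv i f) := by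
        rw [← mul_assoc, Finset.prod_erase_mul _ _ (Finset.mem_univ j)]; rfl
      rw [this]
      exact Ideal.mul_mem_left _ _ (II_euler (hf j) i)) s E
    (fun i => by
      by_cases hi : i ∈ s
      · have := hd i
        simp [hE, onS, hi]; omega
      · simp [hE, onS, hi])
    (P0 ^ NH) (pow_ne_zero _ hP0)
    (UU_mono (fun i => by
      by_cases hi : i ∈ s
      · simp [hE, onS, hi, hN, mul_assoc]
      · simp [hE, onS, hi]) (UU_pow hP0U NH))
    ((hmemJ _).2 fun j => by
      have := II_pow (hP0I j) NH
      convert this using 1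
      congr 1
      rw [hN]; push_cast; ring)
  obtain ⟨B, hB⟩ := span_good (d := d) (ζ := ζ) (t := t) (s := s) (N := N) (m := m) (fun w hw => by
    refine ⟨UU_mono ?_ hw.2, (hmemJ _).1 hw.1⟩
    intro i
    by_cases hi : i ∈ s
    · have : ∑ l ∈ Finset.Ioi i, E l = N * ∑ l ∈ s.filter (fun l => i < l), d l := by
        rw [Finset.mul_sum, hE]
        unfold onS
        rw [← Finset.sum_filter]
        refine Finset.sum_congr ?_ (fun _ _ => rfl)
        ext l; simp [and_comm]
      rw [this]
      simp only [onS, hi, if_true]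
      split_ifs
      · exact Nat.zero_le _
      · simp only [hE, onS, hi, if_true, ee]
        apply le_of_eq; ring
    · simp [hE, onS, hi]) hspan
  rw [pis_closure hh] at hB
  obtain ⟨B2, hB2⟩ := pis_UU s h
  rw [pis_closure hh] at hB2
  refine ⟨N, B + B2 + CH, hNpos, ?_⟩
  intro θ
  induction θ with
  | zero =>
    intro D _ _ f hf
    exact ⟨0, zero_mem _, fun j => II_of_nonpos (by simp) _⟩
  | succ θ ih =>
    intro D hD0 hDl
    refine peel_all hd hsep (s := s) (D₀ := fun i => D i - (B + B2)) (fun i => N * (θ + 1) * ee m d s i + CH) ?_ ?_ hD0 ?_ ?_ h hh ?_ ?_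
    · intro i _
      have : d i ≤ ee m d s i := by unfold ee; omega
      have := Nat.mul_le_mul_left (N * (θ + 1)) this
      omega
    · intro i hi o D' h1 h2 f hf
      refine hIND' i hi o (θ + 1) D' h1 (fun l hl => ?_) f hf
      have := Nat.mul_le_mul_left (N * (θ + 1)) (ee_mono (m := m) (d := d) (Finset.erase_subset i s) l)
      have := h2 l hl
      omega
    · intro i; exact Nat.sub_le _ _
    · intro i hi; have := hDl i hi; omega
    · intro f hf
      refine UU_mono (fun i => ?_) (UU_mul hB2 hf)
      by_cases hi : i ∈ s
      · have := hDl i hi; simp only [onS, hi, if_true, Pi.add_apply]; omega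
      · simp [onS, hi, hD0 i hi]
    · intro f hf
      refine hB θ D hD0 ?_ _ ?_ ?_ f hf
      · intro D' h1 h2 f hf
        refine ih D' h1 (fun i hi => ?_) f hf
        have h3 := hDl i hi
        have h4 := h2 i hi
        have : N * (θ + 1) * ee m d s i = N * θ * ee m d s i + N * ee m d s i := by ring
        omega
      · intro i hi; simp [hD0 i hi]
      · intro i hi; have := hDl i hi; omega
end
end Dys
namespace Dys
open MvPolynomial
section
variable {K : Type*} [Field K] {n : ℕ}

noncomputable def SS {n : ℕ} (d : Fin n → ℕ) (Θ : ℕ) (t : ℚ) : Finset (Fin n → ℕ) :=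
  (Fintype.piFinset (fun i => Finset.range (Θ * d i))).filter (fun k => ∑ i, (k i : ℚ) / (d i : ℚ) < Θ * t)

theorem mem_SS {d : Fin n → ℕ} {Θ : ℕ} {t : ℚ} {k : Fin n → ℕ} (h : k ∈ SS d Θ t) :
    (∀ i, k i < Θ * d i) ∧ ∑ i, (k i : ℚ) / (d i : ℚ) < Θ * t := by
  rw [SS, Finset.mem_filter, Fintype.mem_piFinset] at h
  exact ⟨fun i => by simpa using h.1 i, h.2⟩

theorem vol_le {d : Fin n → ℕ} (hd : ∀ i, 0 < d i) {Θ : ℕ} (hΘ : 0 < Θ) (t : ℚ) :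
    Vol n t ≤ (SS d Θ t).card * ∏ i, (1 / ((Θ : ℝ) * d i)) := by
  classical
  unfold Vol
  have hΘr : (0 : ℝ) < Θ := by exact_mod_cast hΘ
  have hdr : ∀ i, (0 : ℝ) < d i := fun i => by exact_mod_cast hd i
  have hpos : ∀ i, (0 : ℝ) < (Θ : ℝ) * d i := fun i => mul_pos hΘr (hdr i)
  let cell : (Fin n → ℕ) → Set (Fin n → ℝ) := fun k =>
    Set.Icc (fun i => (k i : ℝ) / ((Θ : ℝ) * d i)) (fun i => ((k i : ℝ) + 1) / ((Θ : ℝ) * d i))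
  have hcell : ∀ k, MeasureTheory.volume (cell k) = ENNReal.ofReal (∏ i, (1 / ((Θ : ℝ) * d i))) := by
    intro k
    rw [Real.volume_Icc_pi, ENNReal.ofReal_prod_of_nonneg]
    · refine Finset.prod_congr rfl fun i _ => ?_
      congr 1; ring
    · intro i _; exact (one_div_pos.2 (hpos i)).le
  have hsub : {x : Fin n → ℝ | (∀ i, x i ∈ Set.Icc (0 : ℝ) 1) ∧ ∑ i, x i < (t : ℝ)} ⊆
      ⋃ k ∈ SS d Θ t, cell k := by
    rintro x ⟨hx, hxt⟩
    have hfl : ∀ i, ∃ k : ℕ, k < Θ * d i ∧ (k : ℝ) ≤ x i * (Θ * d i) ∧ x i * (Θ * d i) ≤ k + 1 := by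
      intro i
      have h0 : 0 ≤ x i * (Θ * d i) := mul_nonneg (hx i).1 (hpos i).le
      have hp : 0 < Θ * d i := Nat.mul_pos hΘ (hd i)
      by_cases h : ⌊x i * (Θ * d i)⌋₊ < Θ * d i
      · exact ⟨_, h, Nat.floor_le h0, (Nat.lt_floor_add_one _).le⟩
      · push Not at h
        have h1 : ((Θ * d i : ℕ) : ℝ) ≤ x i * (Θ * d i) := (Nat.cast_le.2 h).trans (Nat.floor_le h0)
        have h2 : x i * (Θ * d i) ≤ Θ * d i := by
          have := mul_le_mul_of_nonneg_right (hx i).2 (hpos i).le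
          linarith
        refine ⟨Θ * d i - 1, by omega, ?_, ?_⟩
        · rw [Nat.cast_sub hp]; push_cast at h1 ⊢; linarith
        · rw [Nat.cast_sub hp]; push_cast at h1 ⊢; linarith
    choose k hk1 hk2 hk3 using hfl
    refine Set.mem_iUnion₂.2 ⟨k, ?_, ?_, ?_⟩
    · rw [SS, Finset.mem_filter]
      refine ⟨by simpa using hk1, ?_⟩
      have : ∑ i, (k i : ℝ) / (d i : ℝ) < Θ * (t : ℝ) := by
        calc ∑ i, (k i : ℝ) / (d i : ℝ) ≤ ∑ i, Θ * x i := by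
              refine Finset.sum_le_sum fun i _ => ?_
              rw [div_le_iff₀ (hdr i)]
              have := hk2 i
              linarith
          _ = Θ * ∑ i, x i := by rw [Finset.mul_sum]
          _ < _ := mul_lt_mul_of_pos_left hxt hΘr
      have h' : ((∑ i, (k i : ℚ) / (d i : ℚ) : ℚ) : ℝ) < ((Θ * t : ℚ) : ℝ) := by push_cast; exact this
      exact Rat.cast_lt.1 h'
    · intro i
      simp only
      rw [div_le_iff₀ (hpos i)]; exact hk2 i
    · intro i
      simp only
      rw [le_div_iff₀ (hpos i)]; exact hk3 i
  have hle : MeasureTheory.volume {x : Fin n → ℝ | (∀ i, x i ∈ Set.Icc (0 : ℝ) 1) ∧ ∑ i, x i < (t : ℝ)} ≤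
      ENNReal.ofReal ((SS d Θ t).card * ∏ i, (1 / ((Θ : ℝ) * d i))) := by
    refine (MeasureTheory.measure_mono hsub).trans ((MeasureTheory.measure_biUnion_finset_le _ _).trans ?_)
    simp only [hcell]
    rw [Finset.sum_const, nsmul_eq_mul, ENNReal.ofReal_mul (by positivity), ENNReal.ofReal_natCast]
  refine ENNReal.toReal_le_of_le_ofReal ?_ hle
  exact mul_nonneg (by positivity) (Finset.prod_nonneg fun i _ => (one_div_pos.2 (hpos i)).le)

theorem tr_neg (z : Fin n → K) (f : MvPolynomial (Fin n) K) : tr z (tr (fun i => - z i) f) = f := by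
  have : (tr z).comp (tr (fun i => - z i)) = AlgHom.id K _ := by
    ext i; simp
  exact DFunLike.congr_fun this f

theorem count_le {m : ℕ} {d : Fin n → ℕ} {ζ : Fin (m + 2) → Fin n → K} {t : Fin (m + 2) → ℚ}
    {Θ : ℕ} {D : Fin n → ℕ} (hD : ∀ i, Θ * d i ≤ D i)
    (hG : ∀ f : Fin (m + 2) → MvPolynomial (Fin n) K, (∀ j, f j ∈ UU K D) → Good d ζ t Θ D f) :
    ∑ j, (SS d Θ (t j)).card ≤ ∏ i, (D i + 1) := by
  classical
  let box := Fintype.piFinset (fun i => Finset.range (D i + 1))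
  let fs : (Fin n → ℕ) → (Fin n →₀ ℕ) := fun k => Finsupp.equivFunOnFinite.symm k
  let inc : UU K D →ₗ[K] (box → K) := LinearMap.pi fun b => (lcoeff K (fs b.1)).comp (UU K D).subtype
  have hinc : Function.Injective inc := by
    rw [← LinearMap.ker_eq_bot, LinearMap.ker_eq_bot']
    rintro ⟨f, hf⟩ h0
    ext k
    by_contra hk
    have hk' : coeff k f ≠ 0 := by simpa using hk
    have hb : (k : Fin n → ℕ) ∈ box := by
      simp only [box, Fintype.mem_piFinset, Finset.mem_range]
      intro i
      have := mem_UU'.1 hf k hk' i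
      omega
    have := congrFun h0 ⟨k, hb⟩
    apply hk'
    have e : fs (k : Fin n → ℕ) = k := by ext i; rfl
    simpa [inc, e] using this
  have : Module.Finite K (UU K D) := Module.Finite.of_injective inc hinc
  have h1 : Module.finrank K (UU K D) ≤ ∏ i, (D i + 1) := by
    have := LinearMap.finrank_le_finrank_of_injective hinc
    simpa [box, Fintype.card_piFinset] using this
  let ev : UU K D →ₗ[K] ((Σ j, SS d Θ (t j)) → K) :=
    LinearMap.pi fun b => (lcoeff K (fs b.2.1)).comp ((tr (ζ b.1)).toLinearMap.comp (UU K D).subtype)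
  have hev : Function.Surjective ev := by
    intro c
    let q : Fin (m + 2) → MvPolynomial (Fin n) K := fun j => ∑ k : SS d Θ (t j), monomial (fs k.1) (c ⟨j, k⟩)
    have hq : ∀ j, q j ∈ UU K D := by
      intro j
      refine sum_mem fun k _ => ?_
      rw [mem_UU']
      intro k' hk' i
      rw [coeff_monomial] at hk'
      split_ifs at hk' with h
      · subst h
        have := (mem_SS k.2).1 i
        have h2 := hD i
        change k.1 i ≤ D i
        omega
      · exact absurd rfl hk'
    obtain ⟨g, hg, hgj⟩ := hG (fun j => tr (fun i => - ζ j i) (q j)) (fun j => UU_tr _ (hq j))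
    refine ⟨⟨g, hg⟩, ?_⟩
    ext ⟨j, k⟩
    change coeff (fs k.1) (tr (ζ j) g) = c ⟨j, k⟩
    have h2 : coeff (fs k.1) (tr (ζ j) (g - tr (fun i => - ζ j i) (q j))) = 0 := by
      by_contra hne
      have h3 := mem_II.1 (hgj j) _ hne
      have h4 := mem_SS k.2
      have h5 : phi d Θ (fs k.1) ≤ ∑ i, (k.1 i : ℚ) / (d i : ℚ) :=
        Finset.sum_le_sum fun i _ => min_le_left _ _
      linarith [h4.2]
    rw [map_sub, tr_neg, coeff_sub, sub_eq_zero] at h2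
    rw [h2]
    simp only [q, coeff_sum, coeff_monomial]
    rw [Finset.sum_eq_single k]
    · simp
    · intro b _ hb
      rw [if_neg]
      intro h
      apply hb
      apply Subtype.ext
      exact Finsupp.equivFunOnFinite.symm.injective h
    · simp
  have h2 := LinearMap.finrank_le_finrank_of_surjective hev
  rw [Module.finrank_fintype_fun_eq_card] at h2
  have h3 : Fintype.card (Σ j, SS d Θ (t j)) = ∑ j, (SS d Θ (t j)).card := by
    simp [Fintype.card_sigma]
  omega

theorem final_count {m : ℕ} {d : Fin n → ℕ} (hd : ∀ i, 0 < d i) {ζ : Fin (m + 2) → Fin n → K} {t : Fin (m + 2) → ℚ}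
    (h : IND d ζ Finset.univ t) :
    ∑ j, Vol n (t j) ≤ ∏ i, ((ee m d Finset.univ i : ℝ) / d i) := by
  obtain ⟨N, C, hN, h⟩ := h
  have hdr : ∀ i, (0 : ℝ) < d i := fun i => by exact_mod_cast hd i
  have hNr : (0 : ℝ) < N := by exact_mod_cast hN
  have key : ∀ θ : ℕ, ∑ j, Vol n (t j) ≤ ∏ i, ((ee m d Finset.univ i : ℝ) / d i + (C + 1) / (N * d i) * (1 / ((θ : ℝ) + 1))) := by
    intro θ
    have hθ : (0 : ℝ) < (θ : ℝ) + 1 := by positivity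
    have hΘ : 0 < N * (θ + 1) := Nat.mul_pos hN (Nat.succ_pos _)
    have hc := count_le (d := d) (ζ := ζ) (t := t) (Θ := N * (θ + 1))
      (D := fun i => N * (θ + 1) * ee m d Finset.univ i + C) (fun i => by
        have : d i ≤ ee m d Finset.univ i := by unfold ee; omega
        have := Nat.mul_le_mul_left (N * (θ + 1)) this
        omega) (fun f hf => h (θ + 1) _ (by simp) (fun i _ => le_rfl) f hf)
    have hc' : (∑ j, ((SS d (N * (θ + 1)) (t j)).card : ℝ)) ≤ ∏ i, ((N * (θ + 1) * ee m d Finset.univ i + C + 1 : ℕ) : ℝ) := by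
      exact_mod_cast hc
    have hΘr : (0 : ℝ) < (N * (θ + 1) : ℕ) := by exact_mod_cast hΘ
    calc ∑ j, Vol n (t j) ≤ ∑ j, ((SS d (N * (θ + 1)) (t j)).card : ℝ) * ∏ i, (1 / (((N * (θ + 1) : ℕ) : ℝ) * d i)) :=
          Finset.sum_le_sum fun j _ => vol_le hd hΘ (t j)
      _ = (∑ j, ((SS d (N * (θ + 1)) (t j)).card : ℝ)) * ∏ i, (1 / (((N * (θ + 1) : ℕ) : ℝ) * d i)) := by
          rw [Finset.sum_mul]
      _ ≤ (∏ i, ((N * (θ + 1) * ee m d Finset.univ i + C + 1 : ℕ) : ℝ)) * ∏ i, (1 / (((N * (θ + 1) : ℕ) : ℝ) * d i)) :=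
          mul_le_mul_of_nonneg_right hc' (Finset.prod_nonneg fun i _ => (one_div_pos.2 (mul_pos hΘr (hdr i))).le)
      _ = _ := by
          rw [← Finset.prod_mul_distrib]
          refine Finset.prod_congr rfl fun i _ => ?_
          have := (hdr i).ne'
          push_cast
          field_simp
          try ring
  have hlim : Filter.Tendsto (fun θ : ℕ => ∏ i, ((ee m d Finset.univ i : ℝ) / d i + (C + 1) / (N * d i) * (1 / ((θ : ℝ) + 1))))
      Filter.atTop (nhds (∏ i, ((ee m d Finset.univ i : ℝ) / d i + (C + 1) / (N * d i) * 0))) := by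
    refine tendsto_finsetProd _ fun i _ => ?_
    exact tendsto_const_nhds.add (tendsto_const_nhds.mul tendsto_one_div_add_atTop_nhds_zero_nat)
  have := ge_of_tendsto' hlim key
  simpa using this
end
end Dys
namespace Dys
open MvPolynomial

theorem index_spec {K : Type*} [Field K] {n : ℕ} (d : Fin n → ℕ) (P : MvPolynomial (Fin n) K) (hP : P ≠ 0)
    (z : Fin n → K) : (∃ q : ℚ, polyIndex d P z = q) ∧
      ∀ k, coeff k (tr z P) ≠ 0 → polyIndex d P z ≤ ∑ i, (k i : ℝ) / (d i : ℝ) := by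
  set S : Set ℝ := {t : ℝ | ∃ k : Fin n →₀ ℕ, coeff k (tr z P) ≠ 0 ∧ t = ∑ i, (k i : ℝ) / (d i : ℝ)} with hS
  have hidx : polyIndex d P z = sInf S := rfl
  have hfin : S.Finite := by
    have : S ⊆ (fun k : Fin n →₀ ℕ => ∑ i, (k i : ℝ) / (d i : ℝ)) '' (tr z P).support := by
      rintro t ⟨k, hk, rfl⟩
      exact ⟨k, by simpa using hk, rfl⟩
    exact ((tr z P).support.finite_toSet.image _).subset this
  have hne : S.Nonempty := by
    have : tr z P ≠ 0 := fun h => hP (tr_inj z (by rw [h, map_zero]))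
    obtain ⟨k, hk⟩ := exists_coeff_ne_zero this
    exact ⟨_, k, hk, rfl⟩
  constructor
  · obtain ⟨k, _, hk⟩ := hne.csInf_mem hfin
    refine ⟨∑ i, (k i : ℚ) / (d i : ℚ), ?_⟩
    rw [hidx, hk]; push_cast; rfl
  · intro k hk
    rw [hidx]
    exact csInf_le hfin.bddBelow ⟨k, hk, rfl⟩

theorem dyson_two {K : Type*} [Field K] [CharZero K]
    (n m : ℕ) (ζ : Fin (m + 2) → Fin n → K)
    (d : Fin n → ℕ) (hd : ∀ i, 0 < d i)
    (t : Fin (m + 2) → ℝ) 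
    (P : MvPolynomial (Fin n) K) (hP : P ≠ 0)
    (hsep : ∀ j j' : Fin (m + 2), j ≠ j' → ∀ i : Fin n, ζ j i ≠ ζ j' i)
    (hdeg : ∀ i : Fin n, degreeOf i P ≤ d i)
    (hindex : ∀ j, polyIndex d P (ζ j) = t j) :
    ∑ j, Vol n (t j) ≤ ∏ i, ((ee m d Finset.univ i : ℝ) / d i) := by
  have h1 : ∀ j, ∃ q : ℚ, t j = q := fun j => by
    rw [← hindex j]; exact (index_spec d P hP (ζ j)).1
  choose q hq using h1
  let L := AlgebraicClosure K
  let φ : K →+* L := algebraMap K L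
  have hφ : Function.Injective φ := φ.injective
  have : CharZero L := charZero_of_injective_ringHom hφ
  let P' : MvPolynomial (Fin n) L := map φ P
  let ζ' : Fin (m + 2) → Fin n → L := fun j i => φ (ζ j i)
  have hP' : P' ≠ 0 := fun h => hP (map_injective φ hφ (by rw [map_zero]; exact h))
  have hsep' : ∀ j j' : Fin (m + 2), j ≠ j' → ∀ i : Fin n, ζ' j i ≠ ζ' j' i :=
    fun j j' hj i h => hsep j j' hj i (hφ h)
  have hPU : P ∈ UU K d := hdeg
  have hPU' : P' ∈ UU L d := by
    rw [mem_UU']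
    intro k hk
    apply mem_UU'.1 hPU k
    intro h0
    apply hk
    rw [coeff_map, h0, map_zero]
  have htr : ∀ j, tr (ζ' j) P' = map φ (tr (ζ j) P) := by
    intro j
    simp only [tr, P', map_bind₁]
    congr 2
    ext i; simp [ζ']
  have hA : Adm d ζ' Finset.univ q := by
    refine ⟨1, one_pos, P', hP', UU_mono (fun i => by simp [onS]) hPU', fun j k hk => ?_⟩
    have hk2 := mem_UU'.1 (UU_tr (ζ' j) hPU') k hk
    rw [htr, coeff_map] at hk
    have hk' : coeff k (tr (ζ j) P) ≠ 0 := fun h => hk (by rw [h, map_zero])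
    have h2 := (index_spec d P hP (ζ j)).2 k hk'
    rw [hindex, hq] at h2
    have h3 : phi d 1 k = ∑ i, (k i : ℚ) / (d i : ℚ) := by
      refine Finset.sum_congr rfl fun i _ => min_eq_left ?_
      rw [div_le_iff₀ (by exact_mod_cast hd i)]
      simpa using hk2 i
    rw [h3]
    have h4 : ((q j : ℚ) : ℝ) ≤ ((∑ i, (k i : ℚ) / (d i : ℚ) : ℚ) : ℝ) := by push_cast; exact h2
    simpa using Rat.cast_le.1 h4
  have := final_count hd (main_ind hd hsep' Finset.univ q hA)
  simpa only [← hq] using this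

theorem vol_le_one (n : ℕ) (τ : ℝ) : Vol n τ ≤ 1 := by
  unfold Vol
  refine ENNReal.toReal_le_of_le_ofReal zero_le_one ?_
  refine (MeasureTheory.measure_mono (t := Set.Icc (0 : Fin n → ℝ) 1) ?_).trans ?_
  · rintro x ⟨hx, _⟩
    exact ⟨fun i => (hx i).1, fun i => (hx i).2⟩
  · rw [Real.volume_Icc_pi]; simp

end Dys

/-- **Dyson's lemma** of Esnault–Viehweg (Theorem 10.5), over an arbitrary field
of characteristic zero: if `P ≠ 0` has degree at most `d_i` in `x_i`, the points
`ζ_1, …, ζ_M ∈ Kⁿ` differ in every coordinate, `d₁ ≥ ⋯ ≥ dₙ > 0`, and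
`t_d(P, ζ_j) = t_j ≥ 0`, then
`Σ_j Vol_n(t_j) ≤ ∏_i (1 + max {M−2, 0} · Σ_{l>i} d_l/d_i)`. -/
theorem dyson_lemma {K : Type*} [Field K] [CharZero K]
    (n M : ℕ) (hn : 1 ≤ n) (hM : 1 ≤ M)
    (ζ : Fin M → Fin n → K)
    (d : Fin n → ℕ) (hdpos : ∀ i, 0 < d i)
    (hdmono : ∀ i i' : Fin n, i ≤ i' → d i' ≤ d i)
    (t : Fin M → ℝ) (ht : ∀ j, 0 ≤ t j)
    (P : MvPolynomial (Fin n) K) (hP : P ≠ 0)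
    (hsep : ∀ j j' : Fin M, j ≠ j' → ∀ i : Fin n, ζ j i ≠ ζ j' i)
    (hdeg : ∀ i : Fin n, MvPolynomial.degreeOf i P ≤ d i)
    (hindex : ∀ j : Fin M, polyIndex d P (ζ j) = t j) :
    ∑ j : Fin M, Vol n (t j) ≤
      ∏ i : Fin n,
        (1 + max ((M : ℝ) - 2) 0 * ∑ l ∈ Finset.Ioi i, (d l : ℝ) / (d i : ℝ)) := by
  obtain _ | _ | m := M
  · omega
  · have hR : ∏ i : Fin n, (1 + max (((0 + 1 : ℕ) : ℝ) - 2) 0 * ∑ l ∈ Finset.Ioi i, (d l : ℝ) / (d i : ℝ)) = 1 := by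
      refine Finset.prod_eq_one fun i _ => ?_
      have : max (((0 + 1 : ℕ) : ℝ) - 2) 0 = 0 := max_eq_right (by norm_num)
      rw [this]; simp
    rw [hR]
    have : ∑ j : Fin (0 + 1), Vol n (t j) = Vol n (t 0) := Fin.sum_univ_one _
    rw [this]
    exact Dys.vol_le_one n _
  · refine (Dys.dyson_two n m ζ d hdpos t P hP hsep hdeg hindex).trans (le_of_eq ?_)
    refine Finset.prod_congr rfl fun i _ => ?_
    have h1 : max (((m + 1 + 1 : ℕ) : ℝ) - 2) 0 = m := by
      rw [max_eq_left] <;> push_cast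
      · ring
      · have : (0 : ℝ) ≤ m := by positivity
        linarith
    have h2 : (d i : ℝ) ≠ 0 := by exact_mod_cast (hdpos i).ne'
    have h3 : (Finset.univ.filter (fun l => i < l)) = Finset.Ioi i := by ext; simp
    rw [h1, ← Finset.sum_div, Dys.ee, h3]
    push_cast
    field_simp
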